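/- arXiv:1106.4075 — 3 statements merged into one kernel-verified Lean document; each statement's English description precedes it below -/
import Mathlib

section
/- Let M_β(x,y) = (1 + ‖x−y‖²)^{−β} be the inverse multiquadric kernel on ℝ^d with parameter β > 0, and let ℰ_σ(x,y) = exp(−‖x−y‖/σ) be the ℓ²-norm exponential kernel with parameter σ > 0, where ‖·‖ is the Euclidean norm. For every d ∈ ℕ and σ, β > 0: (a) there is no λ ≥ 0 for which λM_β − ℰ_σ is a positive semidefinite kernel on ℝ^d; (b) there exists λ ≥ 0 for which λℰ_σ − M_β is a positive semidefinite kernel on ℝ^d if and only if β > d/2. -/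
open scoped ComplexOrder

/-- A function `K : X × X → ℂ` is a positive semidefinite kernel if every finite
quadratic form `∑ j, ∑ k, c j * conj (c k) * K (x j) (x k)` is a nonnegative real number. -/
def IsPSDKernel {X : Type*} (K : X → X → ℂ) : Prop :=
  ∀ (n : ℕ) (x : Fin n → X) (c : Fin n → ℂ),
    0 ≤ ∑ j, ∑ k, c j * (starRingEnd ℂ) (c k) * K (x j) (x k)

/-- The inverse multiquadric kernel `M_β(x,y) = (1 + ‖x−y‖²)^{−β}` on `ℝ^d`. -/
noncomputable def invMultiquadricK (d : ℕ) (β : ℝ) (x y : EuclideanSpace ℝ (Fin d)) : ℂ :=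
  (((1 + ‖x - y‖ ^ 2) ^ (-β) : ℝ) : ℂ)

/-- The `ℓ²`-norm exponential kernel `ℰ_σ(x,y) = exp(−‖x−y‖/σ)` on `ℝ^d`. -/
noncomputable def l2expK (d : ℕ) (σ : ℝ) (x y : EuclideanSpace ℝ (Fin d)) : ℂ :=
  ((Real.exp (-‖x - y‖ / σ) : ℝ) : ℂ)

open MeasureTheory Set Filter Topology

lemma gauss_erf_deriv (x : ℝ) :
    HasDerivAt (fun x : ℝ => ∫ s in (0:ℝ)..x, Real.exp (-s ^ 2)) (Real.exp (-x ^ 2)) x := by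
  have hc : Continuous (fun s : ℝ => Real.exp (-s ^ 2)) := by fun_prop
  exact intervalIntegral.integral_hasDerivAt_right (hc.intervalIntegrable _ _)
    (hc.stronglyMeasurableAtFilter _ _) hc.continuousAt

lemma gauss_erf_top :
    Tendsto (fun x : ℝ => ∫ s in (0:ℝ)..x, Real.exp (-s ^ 2)) atTop (𝓝 (√Real.pi / 2)) := by
  have h1 : IntegrableOn (fun s : ℝ => Real.exp (-s ^ 2)) (Ioi 0) := by
    have := (integrable_exp_neg_mul_sq (one_pos)).integrableOn (s := Ioi (0:ℝ))
    simpa using this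
  have h2 := intervalIntegral_tendsto_integral_Ioi 0 h1 tendsto_id
  have h3 := integral_gaussian_Ioi 1
  simp only [neg_mul, one_mul, div_one] at h3
  rw [h3] at h2
  exact h2

lemma gauss_erf_bot :
    Tendsto (fun x : ℝ => ∫ s in (0:ℝ)..x, Real.exp (-s ^ 2)) atBot (𝓝 (-(√Real.pi / 2))) := by
  have h := (gauss_erf_top.comp tendsto_neg_atBot_atTop).neg
  refine h.congr fun x => ?_
  have := intervalIntegral.integral_comp_neg (a := 0) (b := x) (fun s : ℝ => Real.exp (-s ^ 2))
  simp only [neg_zero, neg_sq] at this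
  rw [this]
  simp only [Function.comp]
  rw [← intervalIntegral.integral_symm]

lemma gauss_glasser {p q : ℝ} (hp : 0 < p) (hq : 0 < q) :
    ∫ v in Ioi (0:ℝ), Real.exp (-(p * v - q / v) ^ 2) = √Real.pi / (2 * p) := by
  set g : ℝ → ℝ := fun x : ℝ => ∫ s in (0:ℝ)..x, Real.exp (-s ^ 2) with hg
  have hinv : Tendsto (fun v : ℝ => q / v) (𝓝[>] 0) atTop :=
    tendsto_inv_nhdsGT_zero.const_mul_atTop hq |>.congr fun v => by rw [div_eq_mul_inv]
  have hinv' : Tendsto (fun v : ℝ => q / v) atTop (𝓝 0) := tendsto_const_nhds.div_atTop tendsto_id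
  have hlin : Tendsto (fun v : ℝ => p * v) (𝓝[>] 0) (𝓝 0) := by
    have : Tendsto (fun v : ℝ => p * v) (𝓝 0) (𝓝 (p * 0)) := by
      apply Continuous.tendsto; fun_prop
    rw [mul_zero] at this
    exact this.mono_left nhdsWithin_le_nhds
  have hlin' : Tendsto (fun v : ℝ => p * v) atTop atTop := tendsto_id.const_mul_atTop hp
  have hm0 : Tendsto (fun v : ℝ => p * v - q / v) (𝓝[>] 0) atBot := by
    simp only [sub_eq_add_neg]
    exact hlin.add_atBot (tendsto_neg_atTop_atBot.comp hinv)
  have hp0 : Tendsto (fun v : ℝ => p * v + q / v) (𝓝[>] 0) atTop := hlin.add_atTop hinv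
  have hmt : Tendsto (fun v : ℝ => p * v - q / v) atTop atTop := by
    simp only [sub_eq_add_neg]
    exact hlin'.atTop_add hinv'.neg
  have hpt : Tendsto (fun v : ℝ => p * v + q / v) atTop atTop := hlin'.atTop_add hinv'
  set h : ℝ → ℝ := fun v => g (p * v - q / v) + Real.exp (4 * p * q) * g (p * v + q / v) with hh
  have h0 : Tendsto h (𝓝[>] 0)
      (𝓝 (-(√Real.pi / 2) + Real.exp (4 * p * q) * (√Real.pi / 2))) :=
    (gauss_erf_bot.comp hm0).add ((gauss_erf_top.comp hp0).const_mul _)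
  have ht : Tendsto h atTop
      (𝓝 ((√Real.pi / 2) + Real.exp (4 * p * q) * (√Real.pi / 2))) :=
    (gauss_erf_top.comp hmt).add ((gauss_erf_top.comp hpt).const_mul _)
  have hd : ∀ v ∈ Ioi (0:ℝ), HasDerivAt h (2 * p * Real.exp (-(p * v - q / v) ^ 2)) v := by
    intro v hv
    have hv0 : v ≠ 0 := ne_of_gt hv
    have e1 : HasDerivAt (fun v : ℝ => p * v - q / v) (p + q / v ^ 2) v := by
      have := ((hasDerivAt_id v).const_mul p).sub ((hasDerivAt_inv hv0).const_mul q)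
      refine (this.congr_deriv ?_)
      field_simp; ring
    have e2 : HasDerivAt (fun v : ℝ => p * v + q / v) (p - q / v ^ 2) v := by
      have := ((hasDerivAt_id v).const_mul p).add ((hasDerivAt_inv hv0).const_mul q)
      refine (this.congr_deriv ?_)
      field_simp; ring
    have := ((gauss_erf_deriv _).comp v e1).add
      (((gauss_erf_deriv _).comp v e2).const_mul (Real.exp (4 * p * q)))
    refine this.congr_deriv ?_
    have : Real.exp (4 * p * q) * Real.exp (-(p * v + q / v) ^ 2)
        = Real.exp (-(p * v - q / v) ^ 2) := by
      rw [← Real.exp_add]; congr 1; field_simp; ring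
    rw [← mul_assoc, this]; ring
  have hint : IntegrableOn (fun v : ℝ => 2 * p * Real.exp (-(p * v - q / v) ^ 2)) (Ioi 0) := by
    have hcw : ContinuousWithinAt (Function.update h 0
      (-(√Real.pi / 2) + Real.exp (4 * p * q) * (√Real.pi / 2))) (Ici 0) 0 := by
      rw [← Ici_sdiff_left] at h0
      exact continuousWithinAt_update_same.mpr h0
    refine integrableOn_Ioi_deriv_of_nonneg hcw (l := (√Real.pi / 2) + Real.exp (4 * p * q) * (√Real.pi / 2)) ?_ (fun x _ => by positivity) ?_
    · intro v hv
      refine (hd v hv).congr_of_eventuallyEq ?_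
      filter_upwards [Ioi_mem_nhds hv] with x hx
      exact Function.update_of_ne (ne_of_gt hx) _ _
    · refine ht.congr' ?_
      filter_upwards [Ioi_mem_atTop 0] with x hx
      exact (Function.update_of_ne (ne_of_gt hx) _ _).symm
  have key := integral_Ioi_deriv_mul_eq_sub (a := (0:ℝ)) (u := fun _ => (1:ℝ)) (u' := fun _ => 0)
    (v := h) (v' := fun v : ℝ => 2 * p * Real.exp (-(p * v - q / v) ^ 2))
    (fun x _ => hasDerivAt_const _ _) hd (by
      refine hint.congr_fun (fun x _ => by simp) measurableSet_Ioi) (by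
      refine h0.congr (fun x => by simp)) (by
      refine ht.congr (fun x => by simp))
  simp only [zero_mul, one_mul, zero_add] at key
  rw [integral_const_mul] at key
  rw [eq_div_iff (by positivity), mul_comm, key]; ring

/-- `e^{-ar}` as a Gaussian mixture. -/
lemma exp_mix {a r : ℝ} (ha : 0 < a) (hr : 0 ≤ r) :
    ∫ v in Ioi (0:ℝ), Real.exp (-(a ^ 2 / 4) * v ^ 2 - r ^ 2 / v ^ 2)
      = √Real.pi / a * Real.exp (-(a * r)) := by
  rcases hr.eq_or_lt with rfl | hr
  · have := integral_gaussian_Ioi (a ^ 2 / 4)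
    simp only [ne_eq, OfNat.ofNat_ne_zero, not_false_eq_true, zero_pow, zero_div, sub_zero,
      mul_zero, neg_zero, Real.exp_zero, mul_one]
    rw [this, show Real.pi / (a ^ 2 / 4) = Real.pi / (a / 2) ^ 2 by ring,
      Real.sqrt_div Real.pi_pos.le, Real.sqrt_sq (by positivity)]
    field_simp
  · have := gauss_glasser (half_pos ha) hr
    have h2 : ∫ v in Ioi (0:ℝ), Real.exp (-(a ^ 2 / 4) * v ^ 2 - r ^ 2 / v ^ 2)
      = ∫ v in Ioi (0:ℝ), Real.exp (-(a * r)) * Real.exp (-(a / 2 * v - r / v) ^ 2) := by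
      refine setIntegral_congr_fun measurableSet_Ioi fun v hv => ?_
      have hv0 : v ≠ 0 := ne_of_gt hv
      rw [← Real.exp_add]; congr 1; field_simp; ring
    rw [h2, integral_const_mul, this]
    field_simp

noncomputable def wE (a u : ℝ) : ℝ := u ^ (-(3/2) : ℝ) * Real.exp (-(a ^ 2 / 4) / u)

lemma exp_mix' {a r : ℝ} (ha : 0 < a) (hr : 0 ≤ r) :
    ∫ u in Ioi (0:ℝ), wE a u * Real.exp (-u * r ^ 2)
      = 2 * √Real.pi / a * Real.exp (-(a * r)) := by
  have h := integral_comp_rpow_Ioi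
    (fun v : ℝ => Real.exp (-(a ^ 2 / 4) * v ^ 2 - r ^ 2 / v ^ 2)) (p := -(1/2)) (by norm_num)
  rw [exp_mix ha hr] at h
  have h2 : ∫ x in Ioi (0:ℝ), (|(-(1/2):ℝ)| * x ^ ((-(1/2) : ℝ) - 1)) •
      Real.exp (-(a ^ 2 / 4) * (x ^ (-(1/2):ℝ)) ^ 2 - r ^ 2 / (x ^ (-(1/2):ℝ)) ^ 2)
      = ∫ u in Ioi (0:ℝ), 1 / 2 * (wE a u * Real.exp (-u * r ^ 2)) := by
    refine setIntegral_congr_fun measurableSet_Ioi fun x hx => ?_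
    have hx : 0 < x := hx
    have e : (x ^ (-(1/2):ℝ)) ^ 2 = x⁻¹ := by
      rw [← Real.rpow_natCast, ← Real.rpow_mul hx.le]
      norm_num
      exact Real.rpow_neg_one x
    have e3 : |(-(1/2):ℝ)| = 1 / 2 := by norm_num [abs_of_neg]
    simp only [e, e3, wE, smul_eq_mul]
    rw [mul_assoc, mul_assoc, ← Real.exp_add]
    norm_num
    left
    congr 1
    field_simp
    ring
  rw [h2, integral_const_mul] at h
  linarith [show 2 * √Real.pi / a * Real.exp (-(a * r)) = 2 * (√Real.pi / a * Real.exp (-(a * r))) by ring]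

lemma exp_mix_int {a r : ℝ} (ha : 0 < a) (hr : 0 ≤ r) :
    IntegrableOn (fun u => wE a u * Real.exp (-u * r ^ 2)) (Ioi 0) := by
  apply Integrable.of_integral_ne_zero
  rw [exp_mix' ha hr]; positivity

lemma mq_mix {β s : ℝ} (hβ : 0 < β) (hs : 0 ≤ s) :
    ∫ u in Ioi (0:ℝ), (u ^ (β - 1) * Real.exp (-u)) * Real.exp (-u * s)
      = Real.Gamma β * (1 + s) ^ (-β) := by
  have h := Real.integral_rpow_mul_exp_neg_mul_Ioi hβ (r := 1 + s) (by positivity)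
  rw [one_div, Real.inv_rpow (by positivity), ← Real.rpow_neg (by positivity), mul_comm] at h
  rw [← h]
  refine setIntegral_congr_fun measurableSet_Ioi fun x hx => ?_
  rw [mul_assoc, ← Real.exp_add]; congr 2; ring

lemma mq_mix_int {β s : ℝ} (hβ : 0 < β) (hs : 0 ≤ s) :
    IntegrableOn (fun u => (u ^ (β - 1) * Real.exp (-u)) * Real.exp (-u * s)) (Ioi 0) := by
  apply Integrable.of_integral_ne_zero
  rw [mq_mix hβ hs]
  have := Real.Gamma_pos_of_pos hβ
  positivity

noncomputable def gQ {d n : ℕ} (x : Fin n → EuclideanSpace ℝ (Fin d)) (c : Fin n → ℂ) (t : ℝ) : ℝ :=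
  ∑ j, ∑ k, (c j * (starRingEnd ℂ) (c k)).re * Real.exp (-t * ‖x j - x k‖ ^ 2)

noncomputable def gS {d n : ℕ} (x : Fin n → EuclideanSpace ℝ (Fin d)) (c : Fin n → ℂ)
    (v : EuclideanSpace ℝ (Fin d)) : ℂ :=
  ∑ j, c j * Complex.exp (Complex.I * ((inner ℝ (x j) v : ℝ) : ℂ))

lemma gS_sq {d n : ℕ} (x : Fin n → EuclideanSpace ℝ (Fin d)) (c : Fin n → ℂ) (b : ℝ)
    (v : EuclideanSpace ℝ (Fin d)) :
    ∑ j, ∑ k, c j * (starRingEnd ℂ) (c k) *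
      Complex.exp (-(b : ℂ) * ‖v‖ ^ 2 + Complex.I * ((inner ℝ (x j - x k) v : ℝ) : ℂ))
    = ((Real.exp (-b * ‖v‖ ^ 2) * Complex.normSq (gS x c v) : ℝ) : ℂ) := by
  push_cast
  rw [← Complex.mul_conj, gS, map_sum, Finset.sum_mul_sum, Finset.mul_sum]
  refine Finset.sum_congr rfl fun j _ => ?_
  rw [Finset.mul_sum]
  refine Finset.sum_congr rfl fun k _ => ?_
  rw [map_mul, ← Complex.exp_conj, map_mul, Complex.conj_I, Complex.conj_ofReal, inner_sub_left]
  rw [Complex.exp_add, Complex.ofReal_sub, mul_sub, sub_eq_add_neg (Complex.I * _), Complex.exp_add,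
    neg_mul Complex.I]
  ring

lemma gQ_eq {d n : ℕ} (x : Fin n → EuclideanSpace ℝ (Fin d)) (c : Fin n → ℂ) {t : ℝ} (ht : 0 < t) :
    Integrable (fun v => Real.exp (-(1 / (4 * t)) * ‖v‖ ^ 2) * Complex.normSq (gS x c v)) ∧
    ∫ v, Real.exp (-(1 / (4 * t)) * ‖v‖ ^ 2) * Complex.normSq (gS x c v)
      = (4 * Real.pi * t) ^ ((d : ℝ) / 2) * gQ x c t := by
  set b : ℝ := 1 / (4 * t) with hb
  have hb0 : 0 < b := by positivity
  have hbc : 0 < (b : ℂ).re := by simpa using hb0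
  have hint : ∀ j k, Integrable (fun v : EuclideanSpace ℝ (Fin d) => c j * (starRingEnd ℂ) (c k) *
      Complex.exp (-(b : ℂ) * ‖v‖ ^ 2 + Complex.I * ((inner ℝ (x j - x k) v : ℝ) : ℂ))) := fun j k =>
    (GaussianFourier.integrable_cexp_neg_mul_sq_norm_add hbc Complex.I (x j - x k)).const_mul _
  have hI : Integrable (fun v => ((Real.exp (-b * ‖v‖ ^ 2) * Complex.normSq (gS x c v) : ℝ) : ℂ)) := by
    simp only [← gS_sq]
    exact integrable_finsetSum _ fun j _ => integrable_finsetSum _ fun k _ => hint j k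
  have hI' : Integrable (fun v => Real.exp (-b * ‖v‖ ^ 2) * Complex.normSq (gS x c v)) := by
    have := hI.re
    simpa only [RCLike.re_to_complex, Complex.ofReal_re] using this
  refine ⟨hI', ?_⟩
  have hE : ∫ v, ((Real.exp (-b * ‖v‖ ^ 2) * Complex.normSq (gS x c v) : ℝ) : ℂ)
      = ∑ j, ∑ k, c j * (starRingEnd ℂ) (c k) *
        (((4 * Real.pi * t) ^ ((d : ℝ) / 2) * Real.exp (-t * ‖x j - x k‖ ^ 2) : ℝ) : ℂ) := by
    simp only [← gS_sq]
    rw [integral_finsetSum _ fun j _ => integrable_finsetSum _ fun k _ => hint j k]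
    refine Finset.sum_congr rfl fun j _ => ?_
    rw [integral_finsetSum _ fun k _ => hint j k]
    refine Finset.sum_congr rfl fun k _ => ?_
    rw [integral_const_mul, GaussianFourier.integral_cexp_neg_mul_sq_norm_add hbc]
    congr 1
    have ht' : (t : ℂ) ≠ 0 := by exact_mod_cast ht.ne'
    push_cast
    rw [Complex.ofReal_cpow (by positivity)]
    congr 2
    · rw [hb]; push_cast; field_simp
    · simp
    · rw [hb]; push_cast; rw [Complex.I_sq]; field_simp
  rw [integral_complex_ofReal] at hE
  have := congrArg Complex.re hE
  rw [Complex.ofReal_re] at this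
  rw [this, gQ, Finset.mul_sum, Complex.re_sum]
  refine Finset.sum_congr rfl fun j _ => ?_
  rw [Finset.mul_sum, Complex.re_sum]
  refine Finset.sum_congr rfl fun k _ => ?_
  rw [Complex.re_mul_ofReal]; ring

lemma gQ_nonneg {d n : ℕ} (x : Fin n → EuclideanSpace ℝ (Fin d)) (c : Fin n → ℂ) {t : ℝ}
    (ht : 0 < t) : 0 ≤ gQ x c t := by
  have h := (gQ_eq x c ht).2
  have h2 : 0 ≤ ∫ v, Real.exp (-(1 / (4 * t)) * ‖v‖ ^ 2) * Complex.normSq (gS x c v) :=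
    integral_nonneg fun v => mul_nonneg (Real.exp_pos _).le (Complex.normSq_nonneg _)
  rw [h] at h2
  exact nonneg_of_mul_nonneg_right h2 (by positivity)

lemma gQ_mono {d n : ℕ} (x : Fin n → EuclideanSpace ℝ (Fin d)) (c : Fin n → ℂ) {s t : ℝ}
    (hs : 0 < s) (hst : s ≤ t) :
    s ^ ((d : ℝ) / 2) * gQ x c s ≤ t ^ ((d : ℝ) / 2) * gQ x c t := by
  have ht : 0 < t := hs.trans_le hst
  obtain ⟨i1, e1⟩ := gQ_eq x c hs
  obtain ⟨i2, e2⟩ := gQ_eq x c ht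
  have h : ∫ v, Real.exp (-(1 / (4 * s)) * ‖v‖ ^ 2) * Complex.normSq (gS x c v) ≤
      ∫ v, Real.exp (-(1 / (4 * t)) * ‖v‖ ^ 2) * Complex.normSq (gS x c v) := by
    refine integral_mono i1 i2 fun v => ?_
    refine mul_le_mul_of_nonneg_right (Real.exp_le_exp.2 ?_) (Complex.normSq_nonneg _)
    refine mul_le_mul_of_nonneg_right (neg_le_neg ?_) (by positivity)
    exact one_div_le_one_div_of_le (by positivity) (by linarith)
  rw [e1, e2, Real.mul_rpow (by positivity) hs.le, Real.mul_rpow (by positivity) ht.le, mul_assoc,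
    mul_assoc] at h
  exact le_of_mul_le_mul_left h (by positivity)

lemma mix_dom {D β a : ℝ} (hD : 0 ≤ D) (hβ : D < β) :
    ∃ L : ℝ, 0 ≤ L ∧ ∀ Q : ℝ → ℝ, (∀ t, 0 < t → 0 ≤ Q t) →
      (∀ s t, 0 < s → s ≤ t → s ^ D * Q s ≤ t ^ D * Q t) →
      IntegrableOn (fun u => wE a u * Q u) (Ioi 0) →
      IntegrableOn (fun u => (u ^ (β - 1) * Real.exp (-u)) * Q u) (Ioi 0) →
      ∫ u in Ioi (0:ℝ), (u ^ (β - 1) * Real.exp (-u)) * Q u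
        ≤ L * ∫ u in Ioi (0:ℝ), wE a u * Q u := by
  set w0 : ℝ := Real.exp (-(a ^ 2 / 4)) with hw0
  have hw0p : 0 < w0 := Real.exp_pos _
  have hw : ∀ t, 1 ≤ t → w0 * t ^ (-(3/2) : ℝ) ≤ wE a t := by
    intro t ht
    have ht0 : 0 < t := by linarith
    rw [wE, mul_comm]
    refine mul_le_mul_of_nonneg_left (Real.exp_le_exp.2 ?_) (by positivity)
    rw [neg_div]
    exact neg_le_neg (div_le_self (by positivity) ht)
  have hwn : ∀ t, 0 < t → 0 ≤ wE a t := fun t ht => by rw [wE]; positivity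
  obtain ⟨N, hN⟩ := exists_nat_ge (β + 1 / 2)
  set C : ℝ := (N.factorial : ℝ) with hC
  have hCp : 0 < C := by rw [hC]; positivity
  have hm : ∀ t, 1 ≤ t → t ^ (β - 1) * Real.exp (-t) ≤ C / w0 * wE a t := by
    intro t ht
    have ht0 : 0 < t := by linarith
    have h1 : t ^ (β + 1 / 2) ≤ C * Real.exp t := by
      calc t ^ (β + 1/2) ≤ t ^ (N : ℝ) := Real.rpow_le_rpow_of_exponent_le ht hN
        _ = t ^ N := Real.rpow_natCast _ _
        _ ≤ C * Real.exp t := by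
          have := Real.pow_div_factorial_le_exp t ht0.le N
          rwa [div_le_iff₀ (by positivity), mul_comm] at this
    have h2 : t ^ (β - 1) = t ^ (β + 1/2) * t ^ (-(3/2) : ℝ) := by
      rw [← Real.rpow_add ht0]; congr 1; ring
    calc t ^ (β - 1) * Real.exp (-t) ≤ (C * Real.exp t * t ^ (-(3/2) : ℝ)) * Real.exp (-t) := by
          rw [h2]; gcongr
      _ = C * t ^ (-(3/2) : ℝ) * (Real.exp t * Real.exp (-t)) := by ring
      _ = C / w0 * (w0 * t ^ (-(3/2) : ℝ)) := by
          rw [← Real.exp_add]; field_simp; simp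
      _ ≤ _ := by gcongr; exact hw t ht
  set J : ℝ := ∫ u in Ioc (0:ℝ) 1, u ^ (β - 1 - D) with hJ
  have hJint : IntegrableOn (fun u : ℝ => u ^ (β - 1 - D)) (Ioc 0 1) := by
    have := intervalIntegral.intervalIntegrable_rpow' (a := 0) (b := 1) (r := β - 1 - D) (by linarith)
    rwa [intervalIntegrable_iff_integrableOn_Ioc_of_le zero_le_one] at this
  have hJ0 : 0 ≤ J := setIntegral_nonneg measurableSet_Ioc fun u hu => Real.rpow_nonneg hu.1.le _
  set K : ℝ := 2 ^ D / (w0 * 2 ^ (-(3/2) : ℝ)) with hK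
  have hKp : 0 < K := by positivity
  refine ⟨J * K + C / w0, by positivity, fun Q hQ hmono hiw him => ?_⟩
  have hwQ : ∀ t ∈ Ioi (0:ℝ), 0 ≤ wE a t * Q t := fun t ht => mul_nonneg (hwn t ht) (hQ t ht)
  have hQ1 : Q 1 ≤ K * ∫ u in Ioi (0:ℝ), wE a u * Q u := by
    have h1 : ∀ t ∈ Ioc (1:ℝ) 2, Q 1 ≤ K * (wE a t * Q t) := by
      intro t ht
      have ht0 : 0 < t := by linarith [ht.1]
      have e := hmono 1 t one_pos ht.1.le
      rw [Real.one_rpow, one_mul] at e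
      have e2 : t ^ D ≤ 2 ^ D := Real.rpow_le_rpow ht0.le ht.2 hD
      have e3 : (2:ℝ) ^ (-(3/2) : ℝ) ≤ t ^ (-(3/2) : ℝ) :=
        Real.rpow_le_rpow_of_nonpos ht0 ht.2 (by norm_num)
      have e4 : w0 * 2 ^ (-(3/2) : ℝ) ≤ wE a t := le_trans (by gcongr) (hw t ht.1.le)
      calc Q 1 ≤ t ^ D * Q t := e
        _ ≤ 2 ^ D * Q t := mul_le_mul_of_nonneg_right e2 (hQ t ht0)
        _ = K * ((w0 * 2 ^ (-(3/2) : ℝ)) * Q t) := by rw [hK]; field_simp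
        _ ≤ _ := by
          have := hQ t ht0
          gcongr
    have hsub : Ioc (1:ℝ) 2 ⊆ Ioi 0 := fun t ht => by
      have := ht.1
      exact lt_trans one_pos this
    calc Q 1 = ∫ u in Ioc (1:ℝ) 2, Q 1 := by simp; norm_num
      _ ≤ ∫ u in Ioc (1:ℝ) 2, K * (wE a u * Q u) :=
          setIntegral_mono_on (by simp) ((hiw.mono_set hsub).const_mul _) measurableSet_Ioc h1
      _ = K * ∫ u in Ioc (1:ℝ) 2, wE a u * Q u := integral_const_mul _ _
      _ ≤ _ := by
          refine mul_le_mul_of_nonneg_left ?_ hKp.le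
          exact setIntegral_mono_set hiw
            (ae_restrict_of_forall_mem measurableSet_Ioi hwQ) hsub.eventuallyLE
  have hI1 : ∫ u in Ioc (0:ℝ) 1, (u ^ (β - 1) * Real.exp (-u)) * Q u ≤ J * Q 1 := by
    rw [hJ, ← integral_mul_const]
    refine setIntegral_mono_on (him.mono_set Ioc_subset_Ioi_self) (hJint.mul_const _)
      measurableSet_Ioc fun u hu => ?_
    have e := hmono u 1 hu.1 hu.2
    rw [Real.one_rpow, one_mul] at e
    have e1 : Real.exp (-u) ≤ 1 := Real.exp_le_one_iff.2 (by linarith [hu.1])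
    have hu0 := hu.1
    have hq := hQ u hu.1
    calc (u ^ (β - 1) * Real.exp (-u)) * Q u ≤ (u ^ (β - 1) * 1) * Q u := by gcongr
      _ = u ^ (β - 1 - D) * (u ^ D * Q u) := by
        rw [← mul_assoc, ← Real.rpow_add hu0, mul_one]; congr 2; ring
      _ ≤ _ := by gcongr
  have hsub1 : Ioi (1:ℝ) ⊆ Ioi 0 := Ioi_subset_Ioi zero_le_one
  have hI2 : ∫ u in Ioi (1:ℝ), (u ^ (β - 1) * Real.exp (-u)) * Q u
      ≤ C / w0 * ∫ u in Ioi (0:ℝ), wE a u * Q u := by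
    calc _ ≤ ∫ u in Ioi (1:ℝ), C / w0 * (wE a u * Q u) := by
          refine setIntegral_mono_on (him.mono_set hsub1)
            ((hiw.mono_set hsub1).const_mul _) measurableSet_Ioi fun u hu => ?_
          rw [← mul_assoc]
          exact mul_le_mul_of_nonneg_right (hm u (le_of_lt hu)) (hQ u (hsub1 hu))
      _ = C / w0 * ∫ u in Ioi (1:ℝ), wE a u * Q u := integral_const_mul _ _
      _ ≤ _ := by
          refine mul_le_mul_of_nonneg_left ?_ (by positivity)
          exact setIntegral_mono_set hiw
            (ae_restrict_of_forall_mem measurableSet_Ioi hwQ) hsub1.eventuallyLE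
  have hsplit : ∫ u in Ioi (0:ℝ), (u ^ (β - 1) * Real.exp (-u)) * Q u
      = (∫ u in Ioc (0:ℝ) 1, (u ^ (β - 1) * Real.exp (-u)) * Q u)
        + ∫ u in Ioi (1:ℝ), (u ^ (β - 1) * Real.exp (-u)) * Q u := by
    rw [← setIntegral_union (Ioc_disjoint_Ioi le_rfl) measurableSet_Ioi
      (him.mono_set Ioc_subset_Ioi_self) (him.mono_set hsub1), Ioc_union_Ioi_eq_Ioi zero_le_one]
  rw [hsplit, add_mul, mul_assoc]
  exact add_le_add (hI1.trans (mul_le_mul_of_nonneg_left hQ1 hJ0)) hI2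

lemma psd_re {X : Type*} {k : X → X → ℝ} (h : IsPSDKernel (fun x y => ((k x y : ℝ) : ℂ)))
    (n : ℕ) (x : Fin n → X) (c : Fin n → ℂ) :
    0 ≤ ∑ j, ∑ l, (c j * (starRingEnd ℂ) (c l)).re * k (x j) (x l) := by
  have := (Complex.nonneg_iff.1 (h n x c)).1
  simpa only [Complex.re_sum, Complex.re_mul_ofReal] using this

lemma psd_of_re {X : Type*} {k : X → X → ℝ} (hs : ∀ x y, k x y = k y x)
    (h : ∀ (n : ℕ) (x : Fin n → X) (c : Fin n → ℂ),
      0 ≤ ∑ j, ∑ l, (c j * (starRingEnd ℂ) (c l)).re * k (x j) (x l)) :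
    IsPSDKernel (fun x y => ((k x y : ℝ) : ℂ)) := by
  intro n x c
  rw [Complex.nonneg_iff]
  simp only [Complex.re_sum, Complex.re_mul_ofReal, Complex.im_sum, Complex.im_mul_ofReal]
  refine ⟨h n x c, ?_⟩
  have h1 : ∑ j, ∑ l, (c j * (starRingEnd ℂ) (c l)).im * k (x j) (x l)
      = - ∑ j, ∑ l, (c j * (starRingEnd ℂ) (c l)).im * k (x j) (x l) := by
    conv_lhs => rw [Finset.sum_comm]
    simp only [← Finset.sum_neg_distrib]
    refine Finset.sum_congr rfl fun j _ => Finset.sum_congr rfl fun l _ => ?_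
    rw [hs (x l) (x j)]
    simp only [Complex.mul_im, Complex.conj_re, Complex.conj_im]
    ring
  linarith

lemma psd_ones {X : Type*} {k : X → X → ℝ} (h : IsPSDKernel (fun x y => ((k x y : ℝ) : ℂ)))
    {ι : Type*} [Fintype ι] (x : ι → X) : 0 ≤ ∑ i, ∑ j, k (x i) (x j) := by
  have e := (Fintype.equivFin ι).symm
  have := psd_re h (Fintype.card ι) (fun i => x (e i)) (fun _ => 1)
  simp only [map_one, mul_one, Complex.one_re, one_mul] at this
  rw [← e.sum_comp]
  simp only [← e.sum_comp (fun j => k _ (x j))]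
  exact this

lemma part_a (d : ℕ) (hd : 0 < d) (σ β lam : ℝ) (hσ : 0 < σ) (hβ : 0 < β) (hl : 0 ≤ lam)
    (h : IsPSDKernel (fun x y : EuclideanSpace ℝ (Fin d) =>
      ((lam * (1 + ‖x - y‖ ^ 2) ^ (-β) - Real.exp (-‖x - y‖ / σ) : ℝ) : ℂ))) : False := by
  set A : ℝ := lam * β * σ ^ 2 with hA
  have hA0 : 0 ≤ A := by positivity
  set y : ℝ := 1 / (2 * (A + 1)) with hy
  have hy0 : 0 < y := by positivity
  have hy1 : y ≤ 1 := by rw [hy, div_le_one (by positivity)]; linarith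
  set v : EuclideanSpace ℝ (Fin d) := EuclideanSpace.single ⟨0, hd⟩ (σ * y) with hv
  have hn : ‖v‖ = σ * y := by
    rw [hv, EuclideanSpace.norm_single, Real.norm_of_nonneg (by positivity)]
  have := psd_re h 2 ![0, v] ![1, -1]
  simp [Fin.sum_univ_two] at this
  rw [hn] at this
  have e1 : 1 - β * (σ * y) ^ 2 ≤ (1 + (σ * y) ^ 2) ^ (-β) := by
    have hpos : 0 < 1 + (σ * y) ^ 2 := by positivity
    rw [Real.rpow_def_of_pos hpos]
    have h1 := Real.add_one_le_exp (Real.log (1 + (σ * y) ^ 2) * -β)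
    have h2 := Real.log_le_sub_one_of_pos hpos
    nlinarith
  have e2 : Real.exp (-(σ * y) / σ) * (1 + y) ≤ 1 := by
    rw [show -(σ * y) / σ = -y by field_simp]
    have h1 := Real.add_one_le_exp y
    calc Real.exp (-y) * (1 + y) ≤ Real.exp (-y) * Real.exp y := by
          refine mul_le_mul_of_nonneg_left (by linarith) (Real.exp_pos _).le
      _ = 1 := by rw [← Real.exp_add]; simp
  set E := Real.exp (-(σ * y) / σ)
  set P := (1 + (σ * y) ^ 2) ^ (-β)
  have e3 : 1 - E ≤ lam * (1 - P) := by linarith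
  have e4 : lam * (1 - P) ≤ A * y ^ 2 := by
    have : lam * (1 - P) ≤ lam * (β * (σ * y) ^ 2) := mul_le_mul_of_nonneg_left (by linarith) hl
    rw [hA]; linarith
  have e5 : y ≤ A * y ^ 2 * (1 + y) := by
    have : (1 - E) * (1 + y) ≤ A * y ^ 2 * (1 + y) :=
      mul_le_mul_of_nonneg_right (e3.trans e4) (by linarith)
    linarith
  have e6 : 2 * (A + 1) * y = 1 := by rw [hy]; field_simp
  have e7 : A * y ^ 2 * (1 + y) ≤ A * y ^ 2 * 2 := mul_le_mul_of_nonneg_left (by linarith) (by positivity)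
  have e8 : A * y ^ 2 * 2 = y - 2 * y ^ 2 := by
    linear_combination y * e6
  nlinarith

lemma part_b_mpr (d : ℕ) (σ β : ℝ) (hσ : 0 < σ) (hβ : 0 < β) (h : (d : ℝ) / 2 < β) :
    ∃ lam : ℝ, 0 ≤ lam ∧ IsPSDKernel (fun x y : EuclideanSpace ℝ (Fin d) =>
      ((lam * Real.exp (-‖x - y‖ / σ) - (1 + ‖x - y‖ ^ 2) ^ (-β) : ℝ) : ℂ)) := by
  set a : ℝ := 1 / σ with ha
  have ha0 : 0 < a := by positivity
  have hΓ := Real.Gamma_pos_of_pos hβ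
  obtain ⟨L, hL, hdom⟩ := mix_dom (a := a) (show (0:ℝ) ≤ (d:ℝ) / 2 by positivity) h
  refine ⟨L * (2 * √Real.pi / a) / Real.Gamma β, by positivity, ?_⟩
  apply psd_of_re
  · intro x y; rw [norm_sub_rev]
  intro n x c
  have i1 : ∀ j l, IntegrableOn (fun u => (c j * (starRingEnd ℂ) (c l)).re *
      (wE a u * Real.exp (-u * ‖x j - x l‖ ^ 2))) (Ioi 0) := fun j l =>
    (exp_mix_int ha0 (norm_nonneg _)).const_mul _
  have i2 : ∀ j l, IntegrableOn (fun u => (c j * (starRingEnd ℂ) (c l)).re *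
      ((u ^ (β - 1) * Real.exp (-u)) * Real.exp (-u * ‖x j - x l‖ ^ 2))) (Ioi 0) := fun j l =>
    (mq_mix_int hβ (by positivity)).const_mul _
  have q : ∀ (f : ℝ → ℝ) u, f u * gQ x c u = ∑ j, ∑ l, (c j * (starRingEnd ℂ) (c l)).re *
      (f u * Real.exp (-u * ‖x j - x l‖ ^ 2)) := by
    intro f u
    rw [gQ, Finset.mul_sum]
    refine Finset.sum_congr rfl fun j _ => ?_
    rw [Finset.mul_sum]
    refine Finset.sum_congr rfl fun l _ => ?_
    ring
  have I1 : IntegrableOn (fun u => wE a u * gQ x c u) (Ioi 0) := by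
    simp only [q (wE a)]
    exact integrable_finsetSum _ fun j _ => integrable_finsetSum _ fun k _ => i1 j k
  have I2 : IntegrableOn (fun u => (u ^ (β - 1) * Real.exp (-u)) * gQ x c u) (Ioi 0) := by
    simp only [q (fun u => u ^ (β - 1) * Real.exp (-u))]
    exact integrable_finsetSum _ fun j _ => integrable_finsetSum _ fun k _ => i2 j k
  have E1 : ∫ u in Ioi (0:ℝ), wE a u * gQ x c u = ∑ j, ∑ l, (c j * (starRingEnd ℂ) (c l)).re *
      (2 * √Real.pi / a * Real.exp (-(a * ‖x j - x l‖))) := by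
    simp only [q (wE a)]
    rw [integral_finsetSum _ fun j _ => integrable_finsetSum _ fun k _ => i1 j k]
    refine Finset.sum_congr rfl fun j _ => ?_
    rw [integral_finsetSum _ fun k _ => i1 j k]
    refine Finset.sum_congr rfl fun l _ => ?_
    rw [integral_const_mul, exp_mix' ha0 (norm_nonneg _)]
  have E2 : ∫ u in Ioi (0:ℝ), (u ^ (β - 1) * Real.exp (-u)) * gQ x c u
      = ∑ j, ∑ l, (c j * (starRingEnd ℂ) (c l)).re *
      (Real.Gamma β * (1 + ‖x j - x l‖ ^ 2) ^ (-β)) := by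
    simp only [q (fun u => u ^ (β - 1) * Real.exp (-u))]
    rw [integral_finsetSum _ fun j _ => integrable_finsetSum _ fun k _ => i2 j k]
    refine Finset.sum_congr rfl fun j _ => ?_
    rw [integral_finsetSum _ fun k _ => i2 j k]
    refine Finset.sum_congr rfl fun l _ => ?_
    rw [integral_const_mul, mq_mix hβ (by positivity)]
  have key := hdom (gQ x c) (fun t ht => gQ_nonneg x c ht) (fun s t hs hst => gQ_mono x c hs hst)
    I1 I2
  rw [E1, E2] at key
  refine nonneg_of_mul_nonneg_right (a := Real.Gamma β) ?_ hΓ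
  rw [← sub_nonneg] at key
  refine key.trans_eq ?_
  simp only [Finset.mul_sum, ← Finset.sum_sub_distrib]
  refine Finset.sum_congr rfl fun j _ => Finset.sum_congr rfl fun l _ => ?_
  rw [show -(a * ‖x j - x l‖) = -‖x j - x l‖ / σ by rw [ha]; ring]
  field_simp

lemma sum_inj_le {ι κ : Type*} [Fintype ι] [Fintype κ] (e : ι → κ) (he : Function.Injective e)
    (f : κ → ℝ) (hf : ∀ k, 0 ≤ f k) : ∑ i, f (e i) ≤ ∑ k, f k := by
  have : ∑ i, f (e i) = ∑ k ∈ Finset.univ.map ⟨e, he⟩, f k := by simp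
  rw [this]
  exact Finset.sum_le_univ_sum_of_nonneg hf

lemma row_bound {τ : ℝ} (hτ : 0 < τ) : ∃ C : ℝ, 0 ≤ C ∧ ∀ (M : ℕ) (p : Fin M),
    ∑ q : Fin M, Real.exp (-(τ * |((p : ℕ) : ℝ) - ((q : ℕ) : ℝ)|)) ≤ C := by
  set f : ℤ → ℝ := fun z => Real.exp (-(τ * |(z : ℝ)|)) with hf
  have hg : Summable (fun n : ℕ => Real.exp (-(τ * (n : ℝ)))) := by
    have := Real.summable_exp_nat_mul_iff (a := -τ) |>.2 (by linarith)
    refine this.congr fun n => ?_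
    congr 1; ring
  have hs : Summable f := by
    refine Summable.of_nat_of_neg ?_ ?_
    · refine hg.congr fun n => ?_
      simp [hf]
    · refine hg.congr fun n => ?_
      simp [hf]
  refine ⟨∑' z, f z, tsum_nonneg fun z => (Real.exp_pos _).le, fun M p => ?_⟩
  have hi : Function.Injective (fun q : Fin M => ((p : ℕ) : ℤ) - ((q : ℕ) : ℤ)) := by
    intro q q' h
    simp only at h
    ext; omega
  have : ∑ q : Fin M, Real.exp (-(τ * |((p : ℕ) : ℝ) - ((q : ℕ) : ℝ)|))
      = ∑ z ∈ Finset.univ.map ⟨_, hi⟩, f z := by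
    simp [hf]
  rw [this]
  exact hs.sum_le_tsum _ fun z _ => (Real.exp_pos _).le

noncomputable def gpt {d : ℕ} (m : Fin d → ℕ) : EuclideanSpace ℝ (Fin d) :=
  WithLp.toLp 2 fun a => (m a : ℝ)

lemma exp_row {d : ℕ} (hd : 0 < d) {σ : ℝ} (hσ : 0 < σ) : ∃ C : ℝ, 0 ≤ C ∧
    ∀ (M : ℕ) (i : Fin d → Fin M),
    ∑ j : Fin d → Fin M, Real.exp (-‖gpt (fun a => (i a : ℕ)) - gpt (fun a => (j a : ℕ))‖ / σ) ≤ C := by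
  have hd' : (0:ℝ) < d := by exact_mod_cast hd
  obtain ⟨C, hC, hrow⟩ := row_bound (τ := 1 / (d * σ)) (by positivity)
  refine ⟨C ^ d, by positivity, fun M i => ?_⟩
  calc _ ≤ ∑ j : Fin d → Fin M, ∏ a, Real.exp (-(1 / (d * σ) * |((i a : ℕ) : ℝ) - ((j a : ℕ) : ℝ)|)) := by
        refine Finset.sum_le_sum fun j _ => ?_
        rw [← Real.exp_sum]
        refine Real.exp_le_exp.2 ?_
        rw [Finset.sum_neg_distrib, ← Finset.mul_sum, neg_div]
        refine neg_le_neg ?_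
        have : ∑ a, |((i a : ℕ) : ℝ) - ((j a : ℕ) : ℝ)|
            ≤ ∑ a : Fin d, ‖gpt (fun a => (i a : ℕ)) - gpt (fun a => (j a : ℕ))‖ := by
          refine Finset.sum_le_sum fun a _ => ?_
          have := PiLp.norm_apply_le (gpt (fun a => (i a : ℕ)) - gpt (fun a => (j a : ℕ))) a
          simpa [gpt] using this
        simp only [Finset.sum_const, Finset.card_univ, Fintype.card_fin, nsmul_eq_mul] at this
        calc _ ≤ 1 / (d * σ) * (d * ‖gpt (fun a => (i a : ℕ)) - gpt (fun a => (j a : ℕ))‖) := by gcongr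
          _ = _ := by field_simp
    _ = ∏ a, ∑ q : Fin M, Real.exp (-(1 / (d * σ) * |((i a : ℕ) : ℝ) - ((q : ℕ) : ℝ)|)) := by
        rw [Finset.prod_univ_sum, Fintype.piFinset_univ]
    _ ≤ ∏ a : Fin d, C := Finset.prod_le_prod (fun a _ => Finset.sum_nonneg fun q _ => (Real.exp_pos _).le)
          fun a _ => hrow M (i a)
    _ = C ^ d := by simp

lemma gpt_norm_sq {d : ℕ} (m : Fin d → ℕ) : ‖gpt m‖ ^ 2 = ∑ a, (m a : ℝ) ^ 2 := by
  rw [EuclideanSpace.norm_sq_eq]; simp [gpt]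

lemma harm_lower (d' : ℕ) {β : ℝ} (hβ : β ≤ ((d' + 1 : ℕ) : ℝ) / 2) (N : ℕ) :
    ((d' : ℝ) + 2) ^ (-(((d' + 1 : ℕ) : ℝ) / 2)) * ∑ n ∈ Finset.range N, (1 / ((n : ℝ) + 1))
    ≤ ∑ m : Fin (d' + 1) → Fin N, (1 + ‖gpt (fun a => (m a : ℕ))‖ ^ 2) ^ (-β) := by
  set D : ℝ := ((d' + 1 : ℕ) : ℝ) / 2 with hD
  let e : (Σ n : Fin N, (Fin d' → Fin ((n : ℕ) + 1))) → (Fin (d' + 1) → Fin N) := fun s =>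
    Fin.cons s.1 fun a => Fin.castLE s.1.2 (s.2 a)
  have he : Function.Injective e := by
    rintro ⟨n, m⟩ ⟨n', m'⟩ h
    have h0 : n = n' := by simpa [e] using congrFun h 0
    subst h0
    have : m = m' := by
      funext a
      have := congrFun h a.succ
      simpa [e] using this
    rw [this]
  refine le_trans ?_ (sum_inj_le e he
    (fun m => (1 + ‖gpt (fun a => (m a : ℕ))‖ ^ 2) ^ (-β)) (fun m => by positivity))
  rw [Fintype.sum_sigma, ← Fin.sum_univ_eq_sum_range (fun n => 1 / ((n : ℝ) + 1)), Finset.mul_sum]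
  refine Finset.sum_le_sum fun n _ => ?_
  set t : ℝ := ((n : ℕ) : ℝ) + 1 with ht
  have ht1 : 1 ≤ t := by rw [ht]; linarith [Nat.cast_nonneg (α := ℝ) (n : ℕ)]
  have ht0 : 0 < t := by linarith
  have hterm : ∀ m : Fin d' → Fin ((n : ℕ) + 1),
      ((d' : ℝ) + 2) ^ (-D) * t ^ (-(d' + 1 : ℝ)) ≤
        (1 + ‖gpt (fun a => ((e ⟨n, m⟩ a : Fin N) : ℕ))‖ ^ 2) ^ (-β) := by
    intro m
    have hb : 1 + ‖gpt (fun a => ((e ⟨n, m⟩ a : Fin N) : ℕ))‖ ^ 2 ≤ ((d' : ℝ) + 2) * t ^ 2 := by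
      rw [gpt_norm_sq]
      have : ∑ a, (((e ⟨n, m⟩ a : Fin N) : ℕ) : ℝ) ^ 2 ≤ ∑ a : Fin (d' + 1), t ^ 2 := by
        refine Finset.sum_le_sum fun a _ => ?_
        have : ((e ⟨n, m⟩ a : Fin N) : ℕ) ≤ (n : ℕ) + 1 := by
          refine Fin.cases ?_ (fun a => ?_) a
          · simp [e]
          · simp only [e, Fin.cons_succ, Fin.val_castLE]
            exact (m a).2.le
        have : (((e ⟨n, m⟩ a : Fin N) : ℕ) : ℝ) ≤ t := by rw [ht]; exact_mod_cast this
        gcongr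
      simp at this
      nlinarith
    have h1 : 1 ≤ 1 + ‖gpt (fun a => ((e ⟨n, m⟩ a : Fin N) : ℕ))‖ ^ 2 := by
      linarith [sq_nonneg ‖gpt (fun a => ((e ⟨n, m⟩ a : Fin N) : ℕ))‖]
    calc ((d' : ℝ) + 2) ^ (-D) * t ^ (-(d' + 1 : ℝ)) = (((d' : ℝ) + 2) * t ^ 2) ^ (-D) := by
          rw [Real.mul_rpow (by positivity) (by positivity), ← Real.rpow_natCast t 2,
            ← Real.rpow_mul ht0.le]
          congr 2
          rw [hD]; push_cast; ring
      _ ≤ (1 + ‖gpt (fun a => ((e ⟨n, m⟩ a : Fin N) : ℕ))‖ ^ 2) ^ (-D) :=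
          Real.rpow_le_rpow_of_nonpos (by linarith) hb (by rw [hD]; simp; positivity)
      _ ≤ _ := Real.rpow_le_rpow_of_exponent_le h1 (by linarith)
  calc _ = ∑ m : Fin d' → Fin ((n : ℕ) + 1), ((d' : ℝ) + 2) ^ (-D) * t ^ (-(d' + 1 : ℝ)) := by
        rw [Finset.sum_const, Finset.card_univ, nsmul_eq_mul]
        simp only [Fintype.card_fun, Fintype.card_fin, Nat.cast_pow, Nat.cast_add, Nat.cast_one]
        rw [← ht, Real.rpow_neg ht0.le, show (d' + 1 : ℝ) = ((d' + 1 : ℕ) : ℝ) by push_cast; rfl,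
          Real.rpow_natCast, pow_succ]
        field_simp
    _ ≤ _ := Finset.sum_le_sum fun m _ => hterm m

lemma part_b_mp (d : ℕ) (hd : 0 < d) (σ β lam : ℝ) (hσ : 0 < σ) (hl : 0 ≤ lam)
    (h : IsPSDKernel (fun x y : EuclideanSpace ℝ (Fin d) =>
      ((lam * Real.exp (-‖x - y‖ / σ) - (1 + ‖x - y‖ ^ 2) ^ (-β) : ℝ) : ℂ))) :
    (d : ℝ) / 2 < β := by
  by_contra! hβ
  obtain ⟨C, hC, hrow⟩ := exp_row hd hσ
  have hS : ∀ N : ℕ, 0 < N →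
      ∑ m : Fin d → Fin N, (1 + ‖gpt (fun a => (m a : ℕ))‖ ^ 2) ^ (-β) ≤ lam * 2 ^ d * C := by
    intro N hN
    set S := ∑ m : Fin d → Fin N, (1 + ‖gpt (fun a => (m a : ℕ))‖ ^ 2) ^ (-β) with hSdef
    have h0 := psd_ones h (fun i : Fin d → Fin (2 * N) => gpt (fun a => (i a : ℕ)))
    simp only [Finset.sum_sub_distrib, ← Finset.mul_sum] at h0
    have hup : ∑ i : Fin d → Fin (2 * N), ∑ j : Fin d → Fin (2 * N),
        Real.exp (-‖gpt (fun a => (i a : ℕ)) - gpt (fun a => (j a : ℕ))‖ / σ)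
        ≤ (2 * N : ℝ) ^ d * C := by
      calc _ ≤ ∑ i : Fin d → Fin (2 * N), C := Finset.sum_le_sum fun i _ => hrow _ i
        _ = _ := by simp
    have hlow : (N : ℝ) ^ d * S ≤ ∑ i : Fin d → Fin (2 * N), ∑ j : Fin d → Fin (2 * N),
        (1 + ‖gpt (fun a => (i a : ℕ)) - gpt (fun a => (j a : ℕ))‖ ^ 2) ^ (-β) := by
      let f : (Fin d → Fin N) → (Fin d → Fin (2 * N)) := fun k a => ⟨k a, by have := (k a).2; omega⟩
      have hf : Function.Injective f := by
        intro k k' hk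
        funext a
        have := congrFun hk a
        simp only [f, Fin.mk.injEq] at this
        exact Fin.ext this
      refine le_trans ?_ (sum_inj_le f hf _ (fun i => Finset.sum_nonneg fun j _ => by positivity))
      have : (N : ℝ) ^ d * S = ∑ k : Fin d → Fin N, S := by simp
      rw [this]
      refine Finset.sum_le_sum fun k _ => ?_
      let g : (Fin d → Fin N) → (Fin d → Fin (2 * N)) := fun m a =>
        ⟨k a + m a, by have := (k a).2; have := (m a).2; omega⟩
      have hg : Function.Injective g := by
        intro m m' hm
        funext a
        have := congrFun hm a
        simp only [g, Fin.mk.injEq] at this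
        exact Fin.ext (by omega)
      refine le_trans (le_of_eq ?_) (sum_inj_le g hg _ (fun i => by positivity))
      rw [hSdef]
      refine Finset.sum_congr rfl fun m _ => ?_
      congr 3
      rw [norm_sub_rev]
      congr 1
      ext a
      simp [gpt, f, g]
    have hNd : (0:ℝ) < (N : ℝ) ^ d := by positivity
    refine le_of_mul_le_mul_left ?_ hNd
    calc (N : ℝ) ^ d * S ≤ lam * ((2 * N : ℝ) ^ d * C) := by
          refine hlow.trans ?_
          have := mul_le_mul_of_nonneg_left hup hl
          linarith
      _ = _ := by rw [mul_pow]; ring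
  obtain ⟨d', rfl⟩ : ∃ d', d = d' + 1 := ⟨d - 1, by omega⟩
  set c0 : ℝ := ((d' : ℝ) + 2) ^ (-(((d' + 1 : ℕ) : ℝ) / 2)) with hc0
  have hc0p : 0 < c0 := by positivity
  have ht := Real.tendsto_sum_range_one_div_nat_succ_atTop.const_mul_atTop hc0p
  obtain ⟨N, hN1, hN2⟩ := ((ht.eventually_gt_atTop (lam * 2 ^ (d' + 1) * C)).and
    (eventually_gt_atTop 0)).exists
  exact absurd ((harm_lower d' hβ N).trans (hS N hN2)) (not_le.2 hN1)

/-- (a) No `λ ≥ 0` makes `λM_β − ℰ_σ` positive semidefinite; (b) some `λ ≥ 0`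
makes `λℰ_σ − M_β` positive semidefinite iff `β > d/2`. -/
theorem invMultiquadric_l2exp_inclusion (d : ℕ) (hd : 0 < d)
    (σ β : ℝ) (hσ : 0 < σ) (hβ : 0 < β) :
    (¬ ∃ lam : ℝ, 0 ≤ lam ∧
        IsPSDKernel (fun x y : EuclideanSpace ℝ (Fin d) =>
          (lam : ℂ) * invMultiquadricK d β x y - l2expK d σ x y)) ∧
    ((∃ lam : ℝ, 0 ≤ lam ∧
        IsPSDKernel (fun x y : EuclideanSpace ℝ (Fin d) =>
          (lam : ℂ) * l2expK d σ x y - invMultiquadricK d β x y)) ↔ (d : ℝ) / 2 < β) := by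
  have k1 : ∀ lam : ℝ, (fun x y : EuclideanSpace ℝ (Fin d) =>
          (lam : ℂ) * invMultiquadricK d β x y - l2expK d σ x y) =
      fun x y => ((lam * (1 + ‖x - y‖ ^ 2) ^ (-β) - Real.exp (-‖x - y‖ / σ) : ℝ) : ℂ) := by
    intro lam; funext x y
    rw [invMultiquadricK, l2expK, Complex.ofReal_sub, Complex.ofReal_mul]
  have k2 : ∀ lam : ℝ, (fun x y : EuclideanSpace ℝ (Fin d) =>
          (lam : ℂ) * l2expK d σ x y - invMultiquadricK d β x y) =
      fun x y => ((lam * Real.exp (-‖x - y‖ / σ) - (1 + ‖x - y‖ ^ 2) ^ (-β) : ℝ) : ℂ) := by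
    intro lam; funext x y
    rw [invMultiquadricK, l2expK, Complex.ofReal_sub, Complex.ofReal_mul]
  simp only [k1, k2]
  refine ⟨?_, ?_, fun h => part_b_mpr d σ β hσ hβ h⟩
  · rintro ⟨lam, hl, h⟩
    exact part_a d hd σ β lam hσ hβ hl h
  · rintro ⟨lam, hl, h⟩
    exact part_b_mp d hd σ β lam hσ hl h
end

section
/- Let G_γ(x,y) = exp(−‖x−y‖²/γ) be the Gaussian kernel on ℝ^d with parameter γ > 0, and let M_β(x,y) = (1 + ‖x−y‖²)^{−β} be the inverse multiquadric kernel with parameter β > 0, where ‖·‖ is the Euclidean norm. Then: (a) for every d ∈ ℕ and γ, β > 0, there is no λ ≥ 0 for which λG_γ − M_β is a positive semidefinite kernel on ℝ^d; (b) for every d ∈ ℕ and γ, β > 0, there exists λ ≥ 0 for which λM_β − G_γ is a positive semidefinite kernel on ℝ^d; (c) for fixed γ, β > 0 there is no single constant λ ≥ 0 such that λM_β − G_γ is a positive semidefinite kernel on ℝ^d for every dimension d ∈ ℕ. -/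
open scoped ComplexOrder

/-- The Gaussian kernel `G_γ(x,y) = exp(−‖x−y‖²/γ)` on `ℝ^d`. -/
noncomputable def gaussK (d : ℕ) (γ : ℝ) (x y : EuclideanSpace ℝ (Fin d)) : ℂ :=
  ((Real.exp (-‖x - y‖ ^ 2 / γ) : ℝ) : ℂ)

section Aux

open Filter Topology Asymptotics Finset

lemma psd_real {X : Type*} {K : X → X → ℝ} (h : IsPSDKernel (fun x y => (K x y : ℂ)))
    {ι : Type*} [Fintype ι] (x : ι → X) (c : ι → ℝ) :
    0 ≤ ∑ j, ∑ k, c j * c k * K (x j) (x k) := by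
  have e := (Fintype.equivFin ι).symm
  have h1 := h (Fintype.card ι) (fun j => x (e j)) (fun j => (c (e j) : ℂ))
  simp only [Complex.conj_ofReal] at h1
  have h2 : (0:ℝ) ≤ ∑ j, ∑ k, c (e j) * c (e k) * K (x (e j)) (x (e k)) := by
    exact_mod_cast h1
  rw [← e.sum_comp]
  simpa only [← e.sum_comp (fun k => c _ * c k * K _ (x k))] using h2

lemma diff_pow (n i : ℕ) (hi : i ≤ n) :
    ∑ j ∈ range (n+1), ((-1:ℝ)^(n-j) * n.choose j) * (j:ℝ)^i = if i = n then (n.factorial:ℝ) else 0 := by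
  have h := fwdDiff_iter_eq_sum_shift (1:ℝ) (fun r : ℝ => r^i) n 0
  have h2 : (fwdDiff (1:ℝ))^[n] (fun r : ℝ => r^i) 0 = if i = n then (n.factorial:ℝ) else 0 := by
    split_ifs with hh
    · subst hh; rw [fwdDiff_iter_eq_factorial]; simp
    · rw [fwdDiff_iter_pow_eq_zero_of_lt (lt_of_le_of_ne hi hh)]; simp
  rw [← h2, h]
  refine sum_congr rfl fun j _ => ?_
  simp

lemma diff_form (n m : ℕ) (hm : m ≤ n) :
    ∑ j : Fin (n+1), ∑ k : Fin (n+1), ((-1:ℝ)^(n-j.1) * n.choose j.1) * ((-1:ℝ)^(n-k.1) * n.choose k.1)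
      * (((j.1:ℝ) - (k.1:ℝ))^2)^m = if m = n then (-1)^n * ((2*n).choose n * (n.factorial:ℝ)^2) else 0 := by
  have h0 : ∀ f : ℕ → ℕ → ℝ, ∑ j : Fin (n+1), ∑ k : Fin (n+1), f j.1 k.1
      = ∑ j ∈ range (n+1), ∑ k ∈ range (n+1), f j k := by
    intro f
    simp_rw [Finset.sum_range]
  rw [h0 (fun j k => ((-1:ℝ)^(n-j) * n.choose j) * ((-1:ℝ)^(n-k) * n.choose k)
      * (((j:ℝ) - (k:ℝ))^2)^m)]
  have key : ∀ j k : ℕ, (((j:ℝ) - (k:ℝ))^2)^m = ∑ i ∈ range (2*m+1), (j:ℝ)^i * ((-1)^(2*m-i) * (k:ℝ)^(2*m-i)) * (2*m).choose i := by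
    intro j k
    rw [← pow_mul, sub_eq_add_neg, add_pow]
    refine sum_congr rfl fun i _ => ?_
    rw [neg_pow (k:ℝ)]
  have : ∑ j ∈ range (n+1), ∑ k ∈ range (n+1), ((-1:ℝ)^(n-j) * n.choose j) * ((-1:ℝ)^(n-k) * n.choose k)
      * (((j:ℝ) - (k:ℝ))^2)^m = ∑ i ∈ range (2*m+1), ((-1)^(2*m-i) * (2*m).choose i) *
        ((∑ j ∈ range (n+1), ((-1:ℝ)^(n-j) * n.choose j) * (j:ℝ)^i) *
        (∑ j ∈ range (n+1), ((-1:ℝ)^(n-j) * n.choose j) * (j:ℝ)^(2*m-i))) := by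
    simp_rw [key, sum_mul_sum, mul_sum]
    have : ∀ j ∈ range (n+1), ∀ f : ℕ → ℕ → ℝ, ∑ k ∈ range (n+1), ∑ i ∈ range (2*m+1), f k i
      = ∑ i ∈ range (2*m+1), ∑ k ∈ range (n+1), f k i := fun j _ f => sum_comm
    rw [sum_congr rfl fun j hj => this j hj _, sum_comm]
    refine sum_congr rfl fun i _ => sum_congr rfl fun j _ => sum_congr rfl fun k _ => ?_
    ring
  rw [this]
  split_ifs with h
  · subst h
    rw [sum_eq_single m]
    · rw [show 2*m-m = m by omega, diff_pow _ _ le_rfl]; simp; ring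
    · intro i hi hne
      rcases lt_or_gt_of_ne hne with h1 | h1
      · rw [diff_pow _ i h1.le, if_neg hne]; simp
      · simp at hi
        rw [diff_pow _ (2*m-i) (by omega), if_neg (by omega)]; simp
    · intro h; exact absurd (mem_range.2 (by omega)) h
  · refine sum_eq_zero fun i hi => ?_
    simp at hi
    rcases le_total i m with h1 | h1
    · rw [diff_pow _ i (by omega), if_neg (by omega)]; simp
    · rw [diff_pow _ (2*m-i) (by omega), if_neg (by omega)]; simp

lemma a_core (φ : ℝ → ℝ) (a : ℕ → ℝ) (n : ℕ)
    (ht : (fun u => φ u - ∑ m ∈ range (n+1), a m * u^m) =O[𝓝 0] (fun u => u^(n+1)))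
    (hp : ∀ h : ℝ, ∀ c : Fin (n+1) → ℝ, 0 ≤ ∑ j, ∑ k, c j * c k * φ ((h * j.1 - h * k.1)^2)) :
    0 ≤ (-1)^n * a n := by
  set c : Fin (n+1) → ℝ := fun j => (-1:ℝ)^(n-j.1) * n.choose j.1 with hc
  set K : ℝ := (2*n).choose n * (n.factorial:ℝ)^2 with hK
  have hKpos : 0 < K := by
    have : 0 < (2*n).choose n := Nat.choose_pos (by omega)
    have := n.factorial_pos
    positivity
  have hO : (fun h : ℝ => (∑ j, ∑ k, c j * c k * φ ((h * j.1 - h * k.1)^2)) - (-1)^n * K * a n * h^(2*n)) =O[𝓝 0]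
      (fun h : ℝ => h^(2*n+2)) := by
    have e : ∀ h : ℝ, (∑ j, ∑ k, c j * c k * φ ((h * j.1 - h * k.1)^2)) - (-1)^n * K * a n * h^(2*n)
        = ∑ j, ∑ k, c j * c k * (φ ((h * j.1 - h * k.1)^2) - ∑ m ∈ range (n+1), a m * ((h * j.1 - h * k.1)^2)^m) := by
      intro h
      simp_rw [mul_sub, sum_sub_distrib]
      congr 1
      simp_rw [mul_sum]
      have : ∀ j : Fin (n+1), ∑ k : Fin (n+1), ∑ m ∈ range (n+1), c j * c k * (a m * ((h * j.1 - h * k.1)^2)^m)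
        = ∑ m ∈ range (n+1), ∑ k : Fin (n+1), c j * c k * (a m * ((h * j.1 - h * k.1)^2)^m) := fun j => sum_comm
      simp_rw [this]
      rw [sum_comm]
      have h3 : ∀ m ∈ range (n+1), ∑ j : Fin (n+1), ∑ k : Fin (n+1), c j * c k * (a m * ((h * j.1 - h * k.1)^2)^m)
        = a m * h^(2*m) * (if m = n then (-1)^n * K else 0) := by
        intro m hm
        rw [← diff_form n m (by simp at hm; omega)]
        simp_rw [mul_sum]
        refine sum_congr rfl fun j _ => sum_congr rfl fun k _ => ?_
        rw [← mul_sub, mul_pow, mul_pow, ← pow_mul h]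
        simp only [hc]; ring
      rw [sum_congr rfl h3, sum_eq_single n]
      · simp; ring
      · intro m _ hm; simp [hm]
      · simp
    simp_rw [e]
    refine IsBigO.fun_sum fun j _ => IsBigO.fun_sum fun k _ => ?_
    refine IsBigO.const_mul_left ?_ _
    have ht' : Tendsto (fun h : ℝ => (h * (j.1:ℝ) - h * k.1)^2) (𝓝 0) (𝓝 0) := by
      apply Continuous.tendsto' (by fun_prop); simp
    refine (ht.comp_tendsto ht').trans ?_
    have : ((fun u : ℝ => u^(n+1)) ∘ fun h : ℝ => (h * (j.1:ℝ) - h * k.1)^2) = fun h : ℝ => (((j.1:ℝ)-k.1)^2)^(n+1) * h^(2*n+2) := by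
      ext h; simp only [Function.comp]; rw [← mul_sub, mul_pow, mul_pow, ← pow_mul h]; ring
    rw [this]
    exact (isBigO_refl _ _).const_mul_left _
  by_contra hneg
  push Not at hneg
  have hpos : 0 < - ((-1)^n * K * a n) := by nlinarith
  have ho := hO.trans_isLittleO (isLittleO_pow_pow (𝕜 := ℝ) (show 2*n < 2*n+2 by omega))
  have hb := ho.bound (c := - ((-1)^n * K * a n) / 2) (by positivity)
  have hb' : ∀ᶠ h : ℝ in 𝓝[≠] 0, _ := hb.filter_mono nhdsWithin_le_nhds
  obtain ⟨h, hh, hh0⟩ := (hb'.and self_mem_nhdsWithin).exists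
  have hh1 : 0 < h^(2*n) := by rw [pow_mul]; have : h ≠ 0 := hh0; positivity
  have hq := hp h c
  rw [Real.norm_eq_abs, Real.norm_eq_abs, abs_of_pos hh1] at hh
  have := le_abs_self ((∑ j, ∑ k, c j * c k * φ ((h * j.1 - h * k.1)^2)) - (-1)^n * K * a n * h^(2*n))
  nlinarith


lemma asc_lower (β : ℝ) (hβ : 0 < β) (n : ℕ) :
    β * n.factorial ≤ (ascPochhammer ℝ (n+1)).eval β := by
  induction n with
  | zero => simp
  | succ n ih =>
    rw [ascPochhammer_succ_eval, Nat.factorial_succ]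
    push_cast
    have h1 : (0:ℝ) ≤ β * n.factorial := by positivity
    have h2 := mul_le_mul ih (show ((n:ℝ)+1) ≤ β + (n+1) by linarith) (by positivity) (h1.trans ih)
    nlinarith

lemma multichoose_lower (β : ℝ) (hβ : 0 < β) (n : ℕ) :
    β * n.factorial ≤ (n+1).factorial * Ring.multichoose β (n+1) := by
  have := Ring.factorial_nsmul_multichoose_eq_ascPochhammer β (n+1)
  rw [nsmul_eq_mul] at this
  rw [this, Polynomial.ascPochhammer_smeval_eq_eval]
  exact asc_lower β hβ n

lemma taylor_gauss (γ : ℝ) (n : ℕ) :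
    (fun u : ℝ => Real.exp (-u/γ) - ∑ m ∈ range n, ((-1/γ)^m / m.factorial) * u^m) =O[𝓝 0] (fun u => u^n) := by
  have h := Real.exp_sub_sum_range_isBigO_pow n
  have ht : Tendsto (fun u : ℝ => -u/γ) (𝓝 0) (𝓝 0) := by
    apply Continuous.tendsto' (by fun_prop); simp
  have h2 := h.comp_tendsto ht
  refine (h2.congr_left ?_).trans ?_
  · intro u
    simp only [Function.comp]
    congr 1
    refine sum_congr rfl fun m _ => ?_
    rw [show -u/γ = (-1/γ) * u by ring, mul_pow]; ring
  · have : ((fun u : ℝ => u^n) ∘ fun u : ℝ => -u/γ) = fun u => (-1/γ)^n * u^n := by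
      ext u; simp only [Function.comp]; rw [← mul_pow]; congr 1; ring
    rw [this]
    exact (isBigO_refl _ _).const_mul_left _

lemma taylor_imq (β : ℝ) (n : ℕ) :
    (fun u : ℝ => (1+u)^(-β) - ∑ m ∈ range n, (Ring.choose (-β) m) * u^m) =O[𝓝 0] (fun u => u^n) := by
  have h := (Real.one_add_rpow_hasFPowerSeriesAt_zero (a := -β)).isBigO_sub_partialSum_pow n
  refine (h.congr_left ?_).trans ?_
  · intro u
    simp only [FormalMultilinearSeries.partialSum, zero_add]
    congr 1
    refine sum_congr rfl fun m _ => ?_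
    rw [binomialSeries_apply]; simp
  · simp_rw [← norm_pow]
    exact (isBigO_refl _ _).norm_left

lemma partA (γ β : ℝ) (hγ : 0 < γ) (hβ : 0 < β) (d : ℕ) (hd : 0 < d) (lam : ℝ)
    (h : IsPSDKernel (fun x y : EuclideanSpace ℝ (Fin d) =>
          (lam : ℂ) * gaussK d γ x y - invMultiquadricK d β x y)) : False := by
  have key : ∀ n : ℕ, 0 ≤ (-1:ℝ)^n * (lam * ((-1/γ)^n / n.factorial) - Ring.choose (-β) n) := by
    intro n
    refine a_core (fun u => lam * Real.exp (-u/γ) - (1+u)^(-β))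
      (fun n => lam * ((-1/γ)^n / n.factorial) - Ring.choose (-β) n) n ?_ ?_
    · refine (((taylor_gauss γ (n+1)).const_mul_left lam).sub (taylor_imq β (n+1))).congr_left ?_
      intro u
      simp only [sub_mul, sum_sub_distrib, mul_sub, mul_sum]
      simp only [mul_assoc]
      ring
    · intro t c
      have h' : IsPSDKernel (fun x y : EuclideanSpace ℝ (Fin d) =>
          ((lam * Real.exp (-‖x - y‖ ^ 2 / γ) - (1 + ‖x - y‖ ^ 2) ^ (-β) : ℝ) : ℂ)) := by
        convert h using 3
        simp only [gaussK, invMultiquadricK]; push_cast; rfl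
      have h2 := psd_real h' (fun j : Fin (n+1) => EuclideanSpace.single ⟨0, hd⟩ (t * (j.1:ℝ))) c
      have hn : ∀ a b : ℝ, ‖EuclideanSpace.single (⟨0, hd⟩ : Fin d) a - EuclideanSpace.single ⟨0, hd⟩ b‖^2 = (a-b)^2 := by
        intro a b
        rw [← PiLp.single_sub, EuclideanSpace.norm_single, Real.norm_eq_abs, sq_abs]
      simp only [hn] at h2
      exact h2
  have key2 : ∀ n : ℕ, β * n.factorial ≤ lam * (1/γ)^(n+1) := by
    intro n
    have h1 := key (n+1)
    rw [Ring.choose_neg', mul_sub] at h1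
    have e1 : (-1:ℝ)^(n+1) * (Int.negOnePow ((n+1:ℕ):ℤ) • Ring.multichoose β (n+1)) = Ring.multichoose β (n+1) := by
      rw [Units.smul_def, Int.negOnePow_def, zpow_natCast, zsmul_eq_mul]
      push_cast
      rw [← mul_assoc, ← mul_pow]; simp
    rw [e1] at h1
    have e2 : (-1:ℝ)^(n+1) * (lam * ((-1/γ)^(n+1) / (n+1).factorial)) = lam * (1/γ)^(n+1) / (n+1).factorial := by
      rw [show (-1/γ) = -1 * (1/γ) by ring, mul_pow]
      have : (-1:ℝ)^(n+1) * (-1)^(n+1) = 1 := by rw [← mul_pow]; simp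
      linear_combination (lam * (1/γ)^(n+1) / (n+1).factorial) * this
    rw [e2] at h1
    have h2 := multichoose_lower β hβ n
    have hf : (0:ℝ) < (n+1).factorial := by positivity
    rw [sub_nonneg, le_div_iff₀ hf] at h1
    linarith
  have ht := (FloorSemiring.tendsto_pow_div_factorial_atTop (1/γ)).const_mul (lam * (1/γ))
  rw [mul_zero] at ht
  obtain ⟨n, hn⟩ := (ht.eventually (gt_mem_nhds hβ)).exists
  have := key2 n
  have hf : (0:ℝ) < n.factorial := by positivity
  rw [← mul_div_assoc, div_lt_iff₀ hf] at hn
  rw [pow_succ] at this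
  linarith


lemma schoen (φ : ℝ → ℝ) (h : ∀ d : ℕ, 0 < d → IsPSDKernel (fun x y : EuclideanSpace ℝ (Fin d) => ((φ (‖x-y‖^2) : ℝ) : ℂ)))
    (m : ℕ) (t c : Fin m → ℝ) : 0 ≤ ∑ k, ∑ l, c k * c l * φ (t k ^ 2 + t l ^ 2) := by
  set A := ∑ k, ∑ l, c k * c l * φ (t k ^ 2 + t l ^ 2) with hA
  set B := ∑ k, ∑ l, c k * c l * (φ ((t k - t l)^2) - φ (t k ^ 2 + t l ^ 2)) with hB
  have key : ∀ N : ℕ, 0 < N → 0 ≤ (N:ℝ)^2 * A + N * B := by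
    intro N hN
    have h1 := psd_real (h N hN) (fun p : Fin m × Fin N => EuclideanSpace.single p.2 (t p.1)) (fun p => c p.1)
    simp only [Fintype.sum_prod_type] at h1
    have hn : ∀ (i j : Fin N) (a b : ℝ), ‖EuclideanSpace.single i a - EuclideanSpace.single j b‖^2
        = if i = j then (a-b)^2 else a^2+b^2 := by
      intro i j a b
      split_ifs with hij
      · subst hij
        rw [← PiLp.single_sub, EuclideanSpace.norm_single, Real.norm_eq_abs, sq_abs]
      · rw [norm_sub_sq_real, EuclideanSpace.inner_single_left]
        simp [hij]
    convert h1 using 1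
    rw [hA, hB, mul_sum, mul_sum, ← sum_add_distrib]
    refine sum_congr rfl fun k _ => ?_
    rw [sum_comm, mul_sum, mul_sum, ← sum_add_distrib]
    refine sum_congr rfl fun l _ => ?_
    have e : ∀ i j : Fin N, c k * c l * φ (‖EuclideanSpace.single i (t k) - EuclideanSpace.single j (t l)‖^2)
      = c k * c l * φ (t k ^ 2 + t l ^ 2) + if i = j then c k * c l * (φ ((t k - t l)^2) - φ (t k ^ 2 + t l ^ 2)) else 0 := by
      intro i j
      rw [hn]
      split_ifs <;> ring
    simp_rw [e]
    simp [sum_add_distrib]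
    ring
  by_contra hneg
  push Not at hneg
  obtain ⟨N, hN⟩ := exists_nat_gt (B / (-A))
  have hN' : B / (-A) < ((N+1 : ℕ):ℝ) := by push_cast; linarith
  rw [div_lt_iff₀ (by linarith)] at hN'
  have := key (N+1) (by omega)
  have hp : (0:ℝ) < ((N+1:ℕ):ℝ) := by positivity
  nlinarith

open MeasureTheory Set in
lemma imq_int (β : ℝ) (hβ : 0 < β) (r : ℝ) (hr : 0 < r) :
    IntegrableOn (fun s : ℝ => s^(β-1) * Real.exp (-(r * s))) (Ioi 0) ∧
    ∫ s in Ioi (0:ℝ), s^(β-1) * Real.exp (-(r * s)) = Real.Gamma β * r^(-β) := by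
  have h := Real.integral_rpow_mul_exp_neg_mul_Ioi hβ hr
  have hG := Real.Gamma_pos_of_pos hβ
  have e : (1/r)^β * Real.Gamma β = Real.Gamma β * r^(-β) := by
    rw [one_div, Real.inv_rpow hr.le, Real.rpow_neg hr.le, mul_comm]
  refine ⟨?_, h.trans e⟩
  apply MeasureTheory.Integrable.of_integral_ne_zero
  rw [h]
  have := Real.rpow_pos_of_pos (one_div_pos.2 hr) β
  positivity

open MeasureTheory Set in
lemma partC (γ β : ℝ) (hγ : 0 < γ) (hβ : 0 < β) (lam : ℝ)
    (h : ∀ d : ℕ, 0 < d → IsPSDKernel (fun x y : EuclideanSpace ℝ (Fin d) =>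
          (lam : ℂ) * invMultiquadricK d β x y - gaussK d γ x y)) : False := by
  have hG := Real.Gamma_pos_of_pos hβ
  set η : ℝ := γ * Real.log 2 with hη
  have hηpos : 0 < η := mul_pos hγ (Real.log_pos (by norm_num))
  have hs := schoen (fun u => lam * (1+u)^(-β) - Real.exp (-u/γ)) (fun d hd => by
    convert h d hd using 3
    simp only [gaussK, invMultiquadricK]; push_cast; rfl)
  -- the integrals
  set q : ℝ → ℝ := fun s => 4 * Real.exp (-η*s) * (1 - Real.exp (-η*s)) with hq
  have key : ∀ n : ℕ, 1 ≤ lam / Real.Gamma β * ∫ s in Ioi (0:ℝ), s^(β-1) * Real.exp (-(1*s)) * (q s ^ n)^2 := by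
    intro n
    set P : Polynomial ℝ := (Polynomial.C 4 * Polynomial.X * (1 - Polynomial.X))^n with hP
    have hev : ∀ w : ℝ, (4*w*(1-w))^n = ∑ k : Fin (P.natDegree+1), P.coeff k.1 * w^k.1 := by
      intro w
      have : P.eval w = (4*w*(1-w))^n := by simp [hP]
      rw [← this, Polynomial.eval_eq_sum_range, Finset.sum_range]
    have h1 := hs (P.natDegree+1) (fun k => Real.sqrt (η * k.1)) (fun k => P.coeff k.1)
    have hsq : ∀ k : ℕ, Real.sqrt (η * k) ^ 2 = η * k := fun k => Real.sq_sqrt (by positivity)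
    simp only [hsq, mul_sub, sum_sub_distrib] at h1
    have e2 : ∑ k : Fin (P.natDegree+1), ∑ l : Fin (P.natDegree+1), P.coeff k.1 * P.coeff l.1 * Real.exp (-(η * k.1 + η * l.1)/γ) = 1 := by
      have h2 := hev (1/2)
      norm_num at h2
      have h3 : ∀ k : ℕ, Real.exp (-(η*k)/γ) = (1/2)^k := by
        intro k
        rw [show -(η*k)/γ = k * (-Real.log 2) by rw [hη]; field_simp, Real.exp_nat_mul, Real.exp_neg, Real.exp_log (by norm_num)]
        norm_num
      have h4 : ∀ k l : ℕ, Real.exp (-(η * k + η * l)/γ) = (1/2)^k * (1/2)^l := by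
        intro k l
        rw [← h3, ← h3, ← Real.exp_add]; congr 1; ring
      simp_rw [h4]
      calc _ = (∑ k : Fin (P.natDegree+1), P.coeff k.1 * (1/2)^k.1) * (∑ k : Fin (P.natDegree+1), P.coeff k.1 * (1/2)^k.1) := by
            rw [sum_mul_sum]
            refine sum_congr rfl fun k _ => sum_congr rfl fun l _ => ?_
            ring
        _ = 1 := by rw [← h2]; norm_num
    have e3 : ∫ s in Ioi (0:ℝ), s^(β-1) * Real.exp (-(1*s)) * (q s ^ n)^2
        = ∑ k : Fin (P.natDegree+1), ∑ l : Fin (P.natDegree+1), P.coeff k.1 * P.coeff l.1 * (Real.Gamma β * (1 + (η * k.1 + η * l.1))^(-β)) := by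
      have hr : ∀ k l : ℕ, 0 < 1 + (η * k + η * l) := fun k l => by positivity
      have : ∀ s : ℝ, s^(β-1) * Real.exp (-(1*s)) * (q s ^ n)^2 =
        ∑ k : Fin (P.natDegree+1), ∑ l : Fin (P.natDegree+1), P.coeff k.1 * P.coeff l.1 * (s^(β-1) * Real.exp (-((1 + (η * k.1 + η * l.1))*s))) := by
        intro s
        simp only [hq]
        rw [hev, sq, sum_mul_sum, mul_sum]
        refine sum_congr rfl fun k _ => ?_
        rw [mul_sum]
        refine sum_congr rfl fun l _ => ?_
        have : Real.exp (-((1 + (η * k.1 + η * l.1))*s)) = Real.exp (-(1*s)) * (Real.exp (-η*s)^k.1 * Real.exp (-η*s)^l.1) := by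
          rw [← Real.exp_nat_mul, ← Real.exp_nat_mul, ← Real.exp_add, ← Real.exp_add]; congr 1; ring
        rw [this]; ring
      simp_rw [this]
      rw [integral_finsetSum]
      · refine sum_congr rfl fun k _ => ?_
        rw [integral_finsetSum]
        · refine sum_congr rfl fun l _ => ?_
          rw [integral_const_mul, (imq_int β hβ _ (hr _ _)).2]
        · intro l _
          exact (imq_int β hβ _ (hr _ _)).1.const_mul _
      · intro k _
        refine integrable_finsetSum _ fun l _ => ?_
        exact (imq_int β hβ _ (hr _ _)).1.const_mul _
    rw [e2] at h1
    rw [e3]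
    have e4 : lam / Real.Gamma β * ∑ k : Fin (P.natDegree+1), ∑ l : Fin (P.natDegree+1), P.coeff k.1 * P.coeff l.1 * (Real.Gamma β * (1 + (η * k.1 + η * l.1))^(-β))
      = ∑ k : Fin (P.natDegree+1), ∑ l : Fin (P.natDegree+1), P.coeff k.1 * P.coeff l.1 * (lam * (1 + (η * k.1 + η * l.1))^(-β)) := by
      simp_rw [mul_sum]
      refine sum_congr rfl fun k _ => sum_congr rfl fun l _ => ?_
      field_simp
    rw [e4]; linarith
  have hlim : Tendsto (fun n : ℕ => ∫ s in Ioi (0:ℝ), s^(β-1) * Real.exp (-(1*s)) * (q s ^ n)^2) atTop (𝓝 (∫ s in Ioi (0:ℝ), (0:ℝ))) := by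
    have hq0 : ∀ s : ℝ, 0 < s → 0 ≤ q s := by
      intro s hs0
      have : Real.exp (-η*s) ≤ 1 := Real.exp_le_one_iff.2 (by nlinarith [mul_pos hηpos hs0])
      have h2 := Real.exp_pos (-η*s)
      simp only [hq]
      exact mul_nonneg (by positivity) (by linarith)
    have hq1 : ∀ s : ℝ, q s ≤ 1 := by
      intro s
      simp only [hq]
      nlinarith [sq_nonneg (2 * Real.exp (-η*s) - 1)]
    refine tendsto_integral_of_dominated_convergence (fun s => s^(β-1) * Real.exp (-(1*s))) ?_ (imq_int β hβ 1 one_pos).1 ?_ ?_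
    · intro n
      apply Measurable.aestronglyMeasurable
      simp only [hq]
      fun_prop
    · intro n
      filter_upwards [ae_restrict_mem measurableSet_Ioi] with s hs0
      have hs0' : 0 < s := hs0
      have h1 : 0 ≤ s^(β-1) * Real.exp (-(1*s)) := by positivity
      have h2 : (q s ^ n)^2 ≤ 1 := pow_le_one₀ (pow_nonneg (hq0 s hs0) _) (pow_le_one₀ (hq0 s hs0) (hq1 s))
      rw [Real.norm_eq_abs, abs_of_nonneg (mul_nonneg h1 (sq_nonneg _))]
      exact mul_le_of_le_one_right h1 h2
    · have hne : ∀ᵐ s ∂(volume.restrict (Ioi (0:ℝ))), s ≠ 1/γ := by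
        apply ae_restrict_of_ae
        simp [ae_iff]
      filter_upwards [ae_restrict_mem measurableSet_Ioi, hne] with s hs0 hs1
      have hlt : q s < 1 := by
        have : 2 * Real.exp (-η*s) - 1 ≠ 0 := by
          intro h0
          have h1 : Real.exp (-η*s) = Real.exp (-Real.log 2) := by
            rw [Real.exp_neg (Real.log 2), Real.exp_log (by norm_num)]; linarith
          have h2 := Real.exp_injective h1
          have hl : 0 < Real.log 2 := Real.log_pos (by norm_num)
          apply hs1
          rw [eq_div_iff hγ.ne']
          have : Real.log 2 * (s * γ - 1) = 0 := by rw [hη] at h2; linarith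
          rcases mul_eq_zero.1 this with h | h <;> linarith
        have h3 : 0 < (2 * Real.exp (-η*s) - 1)^2 := by positivity
        simp only [hq]
        nlinarith
      have h4 := ((tendsto_pow_atTop_nhds_zero_of_lt_one (hq0 s hs0) hlt).pow 2).const_mul (s^(β-1) * Real.exp (-(1*s)))
      simpa using h4
  have hl2 := hlim.const_mul (lam / Real.Gamma β)
  simp only [integral_zero, mul_zero] at hl2
  have := ge_of_tendsto' hl2 key
  linarith


open MeasureTheory in
lemma psd_integral {S X : Type*} [MeasurableSpace S] {μ : Measure S} {F : S → X → X → ℂ}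
    (hi : ∀ x y, Integrable (fun s => F s x y) μ) (hF : ∀ᵐ s ∂μ, IsPSDKernel (F s)) :
    IsPSDKernel (fun x y => ∫ s, F s x y ∂μ) := by
  intro n x c
  have : ∑ j, ∑ k, c j * (starRingEnd ℂ) (c k) * ∫ s, F s (x j) (x k) ∂μ
      = ∫ s, ∑ j, ∑ k, c j * (starRingEnd ℂ) (c k) * F s (x j) (x k) ∂μ := by
    rw [integral_finsetSum]
    · refine sum_congr rfl fun j _ => ?_
      rw [integral_finsetSum]
      · refine sum_congr rfl fun k _ => ?_
        rw [integral_const_mul]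
      · intro k _; exact (hi _ _).const_mul _
    · intro j _
      exact integrable_finsetSum _ fun k _ => (hi _ _).const_mul _
  rw [this]
  apply integral_nonneg_of_ae
  filter_upwards [hF] with s hs
  exact hs n x c

lemma psd_smul {X : Type*} {K : X → X → ℂ} (h : IsPSDKernel K) (a : ℝ) (ha : 0 ≤ a) :
    IsPSDKernel (fun x y => (a:ℂ) * K x y) := by
  intro n x c
  have h1 := h n x c
  have : ∑ j, ∑ k, c j * (starRingEnd ℂ) (c k) * ((a:ℂ) * K (x j) (x k))
    = (a:ℂ) * ∑ j, ∑ k, c j * (starRingEnd ℂ) (c k) * K (x j) (x k) := by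
    simp_rw [mul_sum]
    refine sum_congr rfl fun j _ => sum_congr rfl fun k _ => ?_
    ring
  rw [this]
  exact mul_nonneg (by exact_mod_cast ha) h1

lemma psd_char {d : ℕ} (v : EuclideanSpace ℝ (Fin d)) :
    IsPSDKernel (fun x y : EuclideanSpace ℝ (Fin d) => Complex.exp (Complex.I * (inner ℝ (x-y) v : ℝ))) := by
  intro n x c
  have : ∑ j, ∑ k, c j * (starRingEnd ℂ) (c k) * Complex.exp (Complex.I * (inner ℝ (x j - x k) v : ℝ))
    = (∑ j, c j * Complex.exp (Complex.I * (inner ℝ (x j) v : ℝ))) *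
      (starRingEnd ℂ) (∑ j, c j * Complex.exp (Complex.I * (inner ℝ (x j) v : ℝ))) := by
    rw [map_sum, sum_mul_sum]
    refine sum_congr rfl fun j _ => sum_congr rfl fun k _ => ?_
    rw [map_mul, ← Complex.exp_conj, map_mul, Complex.conj_I, Complex.conj_ofReal, inner_sub_left]
    push_cast
    rw [mul_sub, sub_eq_add_neg, Complex.exp_add, ← neg_mul]
    ring
  rw [this, Complex.mul_conj]
  exact_mod_cast Complex.normSq_nonneg _

lemma gauss_fourier {d : ℕ} (s : ℝ) (hs : 0 < s) (w : EuclideanSpace ℝ (Fin d)) :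
    MeasureTheory.Integrable (fun v : EuclideanSpace ℝ (Fin d) =>
      ((Real.exp (-‖v‖^2/(4*s)) : ℝ) : ℂ) * Complex.exp (Complex.I * (inner ℝ w v : ℝ))) ∧
    ∫ v : EuclideanSpace ℝ (Fin d), ((Real.exp (-‖v‖^2/(4*s)) : ℝ) : ℂ) * Complex.exp (Complex.I * (inner ℝ w v : ℝ))
      = (((4*Real.pi*s)^((d:ℝ)/2) * Real.exp (-s * ‖w‖^2) : ℝ) : ℂ) := by
  have hb : 0 < (((1/(4*s) : ℝ) : ℂ)).re := by rw [Complex.ofReal_re]; positivity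
  have h1 := GaussianFourier.integrable_cexp_neg_mul_sq_norm_add hb Complex.I w
  have h2 := GaussianFourier.integral_cexp_neg_mul_sq_norm_add hb Complex.I w
  have e : ∀ v : EuclideanSpace ℝ (Fin d), Complex.exp (-((1/(4*s) : ℝ) : ℂ) * ‖v‖^2 + Complex.I * (inner ℝ w v : ℝ))
    = ((Real.exp (-‖v‖^2/(4*s)) : ℝ) : ℂ) * Complex.exp (Complex.I * (inner ℝ w v : ℝ)) := by
    intro v
    rw [Complex.exp_add, Complex.ofReal_exp]
    congr 2
    push_cast
    ring
  simp_rw [e] at h1 h2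
  refine ⟨h1, h2.trans ?_⟩
  have hs' : (s:ℂ) ≠ 0 := by exact_mod_cast hs.ne'
  rw [Complex.ofReal_mul, Complex.ofReal_cpow (by positivity), Complex.ofReal_exp]
  congr 2
  · push_cast
    field_simp
  · simp
  · push_cast
    rw [Complex.I_sq]
    field_simp

lemma gauss_diff {d : ℕ} (s s0 q : ℝ) (hs : 0 < s) (hs0 : 0 < s0)
    (hq : ∀ r : ℝ, 0 ≤ r → q * Real.exp (-r/(4*s0)) ≤ Real.exp (-r/(4*s))) :
    IsPSDKernel (fun x y : EuclideanSpace ℝ (Fin d) =>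
      ((Real.exp (-s * ‖x-y‖^2) - q * (s0/s)^((d:ℝ)/2) * Real.exp (-s0 * ‖x-y‖^2) : ℝ) : ℂ)) := by
  have h1 : IsPSDKernel (fun x y : EuclideanSpace ℝ (Fin d) => ∫ v : EuclideanSpace ℝ (Fin d),
      (((Real.exp (-‖v‖^2/(4*s)) : ℝ) : ℂ) * Complex.exp (Complex.I * (inner ℝ (x-y) v : ℝ))
      - (q:ℂ) * (((Real.exp (-‖v‖^2/(4*s0)) : ℝ) : ℂ) * Complex.exp (Complex.I * (inner ℝ (x-y) v : ℝ))))) := by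
    apply psd_integral
    · intro x y
      exact (gauss_fourier s hs _).1.sub ((gauss_fourier s0 hs0 _).1.const_mul _)
    · refine Eventually.of_forall fun v => ?_
      have := psd_smul (psd_char v) (Real.exp (-‖v‖^2/(4*s)) - q * Real.exp (-‖v‖^2/(4*s0))) (sub_nonneg.2 (hq _ (sq_nonneg _)))
      convert this using 3
      push_cast
      ring
  have hC : (0:ℝ) < (4*Real.pi*s)^((d:ℝ)/2) := by positivity
  have h2 := psd_smul h1 ((4*Real.pi*s)^((d:ℝ)/2))⁻¹ (by positivity)
  convert h2 using 3 with x y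
  rw [MeasureTheory.integral_sub (gauss_fourier s hs _).1 ((gauss_fourier s0 hs0 _).1.const_mul _),
    MeasureTheory.integral_const_mul, (gauss_fourier s hs _).2, (gauss_fourier s0 hs0 _).2]
  have e : (4*Real.pi*s0)^((d:ℝ)/2) = (4*Real.pi*s)^((d:ℝ)/2) * (s0/s)^((d:ℝ)/2) := by
    rw [← Real.mul_rpow (by positivity) (by positivity)]
    congr 1; field_simp
  rw [e]
  norm_cast
  field_simp

open MeasureTheory Set in
lemma partB (γ β : ℝ) (hγ : 0 < γ) (hβ : 0 < β) (d : ℕ) :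
    ∃ lam : ℝ, 0 ≤ lam ∧
        IsPSDKernel (fun x y : EuclideanSpace ℝ (Fin d) =>
          (lam : ℂ) * invMultiquadricK d β x y - gaussK d γ x y) := by
  have hG := Real.Gamma_pos_of_pos hβ
  obtain ⟨s0, hs0def⟩ : ∃ s0 : ℝ, s0 = 1/γ := ⟨_, rfl⟩
  have hs0 : 0 < s0 := by rw [hs0def]; positivity
  obtain ⟨θ, hθ⟩ : ∃ θ : ℝ → ℝ, θ = (Ioi s0).indicator (fun s => (s0/s)^((d:ℝ)/2)) := ⟨_, rfl⟩
  have hθm : Measurable θ := by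
    rw [hθ]; exact Measurable.indicator (by fun_prop) measurableSet_Ioi
  have hθ0 : ∀ s, 0 ≤ θ s := by
    intro s
    rw [hθ]
    apply indicator_nonneg
    intro s hs
    have : s0 < s := hs
    have : 0 < s := hs0.trans this
    positivity
  have hθ1 : ∀ s, θ s ≤ 1 := by
    intro s
    rw [hθ]
    apply indicator_le' (g := fun _ => (1:ℝ))
    · intro s hs
      have h1 : s0 < s := hs
      have h2 : 0 < s := hs0.trans h1
      exact Real.rpow_le_one (by positivity) ((div_le_one h2).2 h1.le) (by positivity)
    · intro s _; exact zero_le_one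
  have hw := (imq_int β hβ 1 one_pos).1
  have hwθ : IntegrableOn (fun s : ℝ => s^(β-1) * Real.exp (-(1*s)) * θ s) (Ioi 0) := by
    refine Integrable.mono' hw (by fun_prop) ?_
    filter_upwards [ae_restrict_mem measurableSet_Ioi] with s hs
    have hs' : 0 < s := hs
    have h1 : 0 ≤ s^(β-1) * Real.exp (-(1*s)) := by positivity
    rw [Real.norm_eq_abs, abs_of_nonneg (mul_nonneg h1 (hθ0 s))]
    exact mul_le_of_le_one_right h1 (hθ1 s)
  obtain ⟨κ, hκ⟩ : ∃ κ : ℝ, κ = ∫ s in Ioi (0:ℝ), s^(β-1) * Real.exp (-(1*s)) * θ s := ⟨_, rfl⟩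
  have hκpos : 0 < κ := by
    rw [hκ, setIntegral_pos_iff_support_of_nonneg_ae _ hwθ]
    · refine lt_of_lt_of_le ?_ (measure_mono (s := Ioi s0) ?_)
      · simp
      · intro s hs
        have h1 : s0 < s := hs
        have h2 : 0 < s := hs0.trans h1
        refine ⟨?_, h2⟩
        rw [Function.mem_support, hθ, indicator_of_mem hs]
        positivity
    · filter_upwards [ae_restrict_mem measurableSet_Ioi] with s hs
      have hs' : 0 < s := hs
      exact mul_nonneg (by positivity) (hθ0 s)
  have hI : ∀ r : ℝ, IntegrableOn (fun s : ℝ => s^(β-1) * Real.exp (-(1*s)) * (Real.exp (-s * r^2) - θ s * Real.exp (-s0 * r^2))) (Ioi 0) ∧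
      ∫ s in Ioi (0:ℝ), s^(β-1) * Real.exp (-(1*s)) * (Real.exp (-s * r^2) - θ s * Real.exp (-s0 * r^2))
        = Real.Gamma β * (1+r^2)^(-β) - κ * Real.exp (-s0 * r^2) := by
    intro r
    have h1 := imq_int β hβ (1+r^2) (by positivity)
    have e : ∀ s : ℝ, s^(β-1) * Real.exp (-(1*s)) * (Real.exp (-s * r^2) - θ s * Real.exp (-s0 * r^2))
      = s^(β-1) * Real.exp (-((1+r^2)*s)) - s^(β-1) * Real.exp (-(1*s)) * θ s * Real.exp (-s0 * r^2) := by
      intro s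
      rw [show -((1+r^2)*s) = -(1*s) + -s*r^2 by ring, Real.exp_add]; ring
    simp_rw [e]
    refine ⟨h1.1.sub (hwθ.mul_const _), ?_⟩
    rw [integral_sub h1.1 (hwθ.mul_const _), h1.2, integral_mul_const, ← hκ]
  have hpsd : IsPSDKernel (fun x y : EuclideanSpace ℝ (Fin d) => ∫ s in Ioi (0:ℝ),
      ((s^(β-1) * Real.exp (-(1*s)) * (Real.exp (-s * ‖x-y‖^2) - θ s * Real.exp (-s0 * ‖x-y‖^2)) : ℝ) : ℂ)) := by
    apply psd_integral
    · intro x y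
      exact (hI _).1.ofReal
    · filter_upwards [ae_restrict_mem measurableSet_Ioi] with s hs
      have hs' : 0 < s := hs
      have hw0 : 0 ≤ s^(β-1) * Real.exp (-(1*s)) := by positivity
      by_cases h : s0 < s
      · have h1 := psd_smul (gauss_diff (d := d) s s0 1 hs' hs0 (fun r hr => by
          rw [one_mul, Real.exp_le_exp, neg_div, neg_div, neg_le_neg_iff]
          gcongr)) _ hw0
        convert h1 using 3
        rw [hθ, indicator_of_mem (show s ∈ Ioi s0 from h)]
        push_cast; ring
      · have h1 := psd_smul (gauss_diff (d := d) s s 0 hs' hs' (fun r hr => by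
          rw [zero_mul]; positivity)) _ hw0
        convert h1 using 3
        rw [hθ, indicator_of_notMem (show s ∉ Ioi s0 from h)]
        push_cast; ring
  refine ⟨κ⁻¹ * Real.Gamma β, by positivity, ?_⟩
  convert psd_smul hpsd κ⁻¹ (by positivity) using 3 with x y
  rw [integral_complex_ofReal, (hI _).2]
  simp only [gaussK, invMultiquadricK]
  rw [show -‖x-y‖^2/γ = -s0 * ‖x-y‖^2 by rw [hs0def]; ring]
  norm_cast
  field_simp

end Aux

/-- (a) In every dimension `d ≥ 1` no `λ ≥ 0` makes `λG_γ − M_β` positive semidefinite;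
(b) in every dimension `d ≥ 1` there exists `λ ≥ 0` making `λM_β − G_γ` positive
semidefinite; (c) no single `λ ≥ 0` works for every dimension simultaneously. -/
theorem gaussian_invMultiquadric_inclusion (γ β : ℝ) (hγ : 0 < γ) (hβ : 0 < β) :
    (∀ d : ℕ, 0 < d →
      ¬ ∃ lam : ℝ, 0 ≤ lam ∧
        IsPSDKernel (fun x y : EuclideanSpace ℝ (Fin d) =>
          (lam : ℂ) * gaussK d γ x y - invMultiquadricK d β x y)) ∧
    (∀ d : ℕ, 0 < d →
      ∃ lam : ℝ, 0 ≤ lam ∧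
        IsPSDKernel (fun x y : EuclideanSpace ℝ (Fin d) =>
          (lam : ℂ) * invMultiquadricK d β x y - gaussK d γ x y)) ∧
    (¬ ∃ lam : ℝ, 0 ≤ lam ∧ ∀ d : ℕ, 0 < d →
      IsPSDKernel (fun x y : EuclideanSpace ℝ (Fin d) =>
        (lam : ℂ) * invMultiquadricK d β x y - gaussK d γ x y)) := by
  refine ⟨?_, ?_, ?_⟩
  · rintro d hd ⟨lam, _, h⟩
    exact partA γ β hγ hβ d hd lam h
  · intro d _
    exact partB γ β hγ hβ d
  · rintro ⟨lam, _, h⟩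
    exact partC γ β hγ hβ lam h
end

section
/- Let X be a set, let (φ_n)_{n∈ℕ} be complex-valued functions on X, and let r : ℕ → ℝ be a real sequence. Assume that for every x ∈ X one has ∑_n |r_n| |φ_n(x)|² < ∞, and that the linear span of the sequences Φ(x) = (φ_n(x))_{n∈ℕ}, x ∈ X, is dense in the weighted space ℓ²_{|r|}(ℕ) (the Hilbert space of sequences c with ∑_n |r_n||c_n|² < ∞). Then the function K_r(x,y) = ∑_n r_n φ_n(x) conj(φ_n(y)) is a positive semidefinite kernel on X if and only if r_n ≥ 0 for every n ∈ ℕ. -/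
open scoped ComplexOrder

/-- `Φ(X)` has dense span in the weighted space `ℓ²_a(ℕ)`: every `c` with
`∑ a_n |c_n|² < ∞` that is orthogonal to every `Φ(x)` (i.e. all the weighted pairings
`∑' n, a_n φ_n(x) conj(c_n)` vanish) must vanish wherever the weight does not. -/
def HasDenseSpanIn {X : Type*} (φ : ℕ → X → ℂ) (a : ℕ → ℝ) : Prop :=
  ∀ c : ℕ → ℂ, (Summable fun n => a n * ‖c n‖ ^ 2) →
    (∀ x : X, ∑' n, (a n : ℂ) * φ n x * (starRingEnd ℂ) (c n) = 0) →
    ∀ n, a n ≠ 0 → c n = 0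

lemma hs_aux_summable {X : Type*} (φ : ℕ → X → ℂ) (r : ℕ → ℝ)
    (hs : ∀ x, Summable fun n => |r n| * ‖φ n x‖ ^ 2) (x y : X) :
    Summable fun n => (r n : ℂ) * φ n x * (starRingEnd ℂ) (φ n y) := by
  refine Summable.of_norm_bounded ((hs x).add (hs y)) fun n => ?_
  simp only [norm_mul, Complex.norm_real, Real.norm_eq_abs, RCLike.norm_conj]
  have h := abs_nonneg (r n)
  have h2 : ‖φ n x‖ * ‖φ n y‖ ≤ ‖φ n x‖ ^ 2 + ‖φ n y‖ ^ 2 := by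
    nlinarith [sq_nonneg (‖φ n x‖ - ‖φ n y‖), sq_nonneg (‖φ n x‖), sq_nonneg (‖φ n y‖)]
  calc |r n| * ‖φ n x‖ * ‖φ n y‖ = |r n| * (‖φ n x‖ * ‖φ n y‖) := by ring
    _ ≤ |r n| * (‖φ n x‖ ^ 2 + ‖φ n y‖ ^ 2) := mul_le_mul_of_nonneg_left h2 h
    _ = _ := by ring

lemma hs_aux_hasSum {X : Type*} (φ : ℕ → X → ℂ) (r : ℕ → ℝ)
    (hs : ∀ x, Summable fun n => |r n| * ‖φ n x‖ ^ 2)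
    (Kr : X → X → ℂ)
    (hKr : ∀ x y, Kr x y = ∑' n, (r n : ℂ) * φ n x * (starRingEnd ℂ) (φ n y))
    (N : ℕ) (x : Fin N → X) (c : Fin N → ℂ) :
    HasSum (fun n => ((r n * ‖∑ j, c j * φ n (x j)‖ ^ 2 : ℝ) : ℂ))
      (∑ j, ∑ k, c j * (starRingEnd ℂ) (c k) * Kr (x j) (x k)) := by
  have h : HasSum (fun n => ∑ j, ∑ k, c j * (starRingEnd ℂ) (c k) *
      ((r n : ℂ) * φ n (x j) * (starRingEnd ℂ) (φ n (x k))))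
      (∑ j, ∑ k, c j * (starRingEnd ℂ) (c k) * Kr (x j) (x k)) := by
    refine hasSum_sum fun j _ => hasSum_sum fun k _ => HasSum.mul_left _ ?_
    rw [hKr]
    exact (hs_aux_summable φ r hs _ _).hasSum
  convert h using 2 with n
  push_cast
  rw [← Complex.mul_conj', map_sum, Finset.sum_mul_sum, Finset.mul_sum]
  refine Finset.sum_congr rfl fun j _ => ?_
  rw [Finset.mul_sum]
  refine Finset.sum_congr rfl fun k _ => ?_
  rw [map_mul]; ring

lemma hs_aux_norm (u : lp (fun _ : ℕ => ℂ) 2) : HasSum (fun n => ‖u n‖ ^ 2) (‖u‖ ^ 2) := by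
  have := lp.hasSum_norm (p := 2) (by norm_num) u
  simpa using this

theorem hilbertSchmidt_psd_iff_nonneg {X : Type*} (φ : ℕ → X → ℂ) (r : ℕ → ℝ)
    (hs : ∀ x, Summable fun n => |r n| * ‖φ n x‖ ^ 2)
    (hd : HasDenseSpanIn φ (fun n => |r n|))
    (Kr : X → X → ℂ)
    (hKr : ∀ x y, Kr x y = ∑' n, (r n : ℂ) * φ n x * (starRingEnd ℂ) (φ n y)) :
    IsPSDKernel Kr ↔ ∀ n, 0 ≤ r n := by
  have key := hs_aux_hasSum φ r hs Kr hKr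
  constructor
  · intro hK m
    by_contra! hm
    have hmem : ∀ x, Memℓp (fun n => (Real.sqrt |r n| : ℂ) * φ n x) 2 := by
      intro x
      apply memℓp_gen
      refine (hs x).congr fun n => ?_
      simp [mul_pow, Real.sq_sqrt]
    let v : X → lp (fun _ : ℕ => ℂ) 2 := fun x => ⟨_, hmem x⟩
    have hv : ∀ x n, v x n = (Real.sqrt |r n| : ℂ) * φ n x := fun x n => rfl
    let S := Submodule.span ℂ (Set.range v)
    -- the inequality on the closure of the span
    have hS : ∀ u ∈ S, 2 * ‖u m‖ ^ 2 ≤ ‖u‖ ^ 2 := by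
      intro u hu
      obtain ⟨N, c, g, hg⟩ := Submodule.mem_span_set'.1 hu
      choose x hx using fun i => (g i).2
      have hun : ∀ n, ‖u n‖ ^ 2 = |r n| * ‖∑ j, c j * φ n (x j)‖ ^ 2 := by
        intro n
        have : u n = (Real.sqrt |r n| : ℂ) * ∑ j, c j * φ n (x j) := by
          rw [← hg, lp.coeFn_sum, Finset.sum_apply, Finset.mul_sum]
          refine Finset.sum_congr rfl fun j _ => ?_
          rw [← hx j, lp.coeFn_smul, Pi.smul_apply, hv, smul_eq_mul]
          ring
        rw [this]
        simp [mul_pow, Real.sq_sqrt]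
      have h1 := hs_aux_norm u
      have h2 := key N x c
      have h3 := hK N x c
      obtain ⟨h3, -⟩ := Complex.le_def.1 h3
      have h4 := Complex.hasSum_re h2
      simp only [Complex.ofReal_re, Complex.zero_re] at h3 h4
      have h5 := le_hasSum (h1.sub h4) m (fun n _ => by
        rw [hun n, ← sub_mul]
        exact mul_nonneg (sub_nonneg.2 (le_abs_self _)) (sq_nonneg _))
      have h6 := hun m
      rw [abs_of_neg hm] at h6
      linarith
    have hcl : ∀ u ∈ S.topologicalClosure, 2 * ‖u m‖ ^ 2 ≤ ‖u‖ ^ 2 := by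
      intro u hu
      have hc : IsClosed {u : lp (fun _ : ℕ => ℂ) 2 | 2 * ‖u m‖ ^ 2 ≤ ‖u‖ ^ 2} := by
        refine isClosed_le ?_ (by fun_prop)
        have : Continuous fun u : lp (fun _ : ℕ => ℂ) 2 => u m :=
          (lp.evalCLM ℂ (fun _ : ℕ => ℂ) 2 m).continuous
        exact continuous_const.mul (this.norm.pow 2)
      exact closure_minimal (s := (S : Set (lp (fun _ : ℕ => ℂ) 2))) hS hc hu
    have he : lp.single 2 m (1 : ℂ) ∈ S.topologicalClosure := by
      rw [← Submodule.orthogonal_orthogonal_eq_closure, Submodule.mem_orthogonal]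
      intro w hw
      rw [lp.inner_single_right]
      have hwm : w m = 0 := by
        have hpos : ∀ n, r n ≠ 0 → (Real.sqrt |r n| : ℂ) ≠ 0 := fun n hn => by
          simpa [Real.sqrt_eq_zero'] using hn
        have := hd (fun n => w n / (Real.sqrt |r n| : ℂ)) ?_ ?_ m (by simpa using hm.ne)
        · simpa [hpos m hm.ne] using (div_eq_zero_iff.1 this).resolve_right (hpos m hm.ne)
        · refine Summable.of_nonneg_of_le (fun n => by positivity) (fun n => ?_)
            (hs_aux_norm w).summable
          by_cases hn : r n = 0
          · simp [hn]
          · have : |r n| ≠ 0 := by simpa using hn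
            simp [div_pow, Real.sq_sqrt]
            field_simp
            rfl
        · intro x
          have hx := (Submodule.mem_orthogonal' _ _).1 hw (v x)
            (Submodule.subset_span (Set.mem_range_self x))
          rw [lp.inner_eq_tsum] at hx
          rw [← hx]
          refine tsum_congr fun n => ?_
          rw [hv]
          by_cases hn : r n = 0
          · simp [hn]
          · have h1 := hpos n hn
            have h2 : ((|r n| : ℝ) : ℂ) = (Real.sqrt |r n| : ℂ) * (Real.sqrt |r n| : ℂ) := by
              rw [← Complex.ofReal_mul, Real.mul_self_sqrt (abs_nonneg _)]
            rw [h2, map_div₀, Complex.conj_ofReal, RCLike.inner_apply]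
            field_simp
      rw [hwm, inner_zero_left]
    have := hcl _ he
    rw [lp.norm_single (by norm_num)] at this
    simp at this
  · intro hr N x c
    have h := key N x c
    rw [← h.tsum_eq, ← Complex.ofReal_tsum]
    exact Complex.zero_le_real.2 (tsum_nonneg fun n => mul_nonneg (hr n) (sq_nonneg _))
end
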